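/- arXiv:2601.08715 — 2 statements merged into one kernel-verified Lean document; each statement's English description precedes it below -/
import Mathlib

section
/- Let n ≥ 4, s = [n n-1 … 1], r = (1 2 … n), δ = (1 2) in S_n, and dist the word metric with respect to {δ, r, r^{-1}}. For every integer i with ⌈n/2⌉ + 2 ≤ i ≤ n, dist(s r^{n-i}, 1) = ⌈n/2⌉(⌈n/2⌉-1) - 1 + ⌊n/2⌋(⌊n/2⌋-1) - 1 + i - ⌈n/2⌉. -/
/-- The transposition `δ = (1 2)` in `S_n` (0-indexed: swaps `0` and `1`). -/
def delta (n : ℕ) (hn : 2 ≤ n) : Equiv.Perm (Fin n) :=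
  Equiv.swap ⟨0, by omega⟩ ⟨1, by omega⟩

/-- The symmetric generating set `{(1 2), (1 2 … n), (1 n … 2)}` of `S_n`. -/
def gens (n : ℕ) (hn : 2 ≤ n) : Set (Equiv.Perm (Fin n)) :=
  {delta n hn, finRotate n, (finRotate n)⁻¹}

/-- `IsMinWordLen n hn g d` says that `d` is the minimal length of a word in the
generators `{(1 2), (1 2 … n), (1 n … 2)}` whose product is `g`; i.e. the distance
in the Cayley graph from `1` to `g` is exactly `d`. -/
def IsMinWordLen (n : ℕ) (hn : 2 ≤ n) (g : Equiv.Perm (Fin n)) (d : ℕ) : Prop :=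
  (∃ l : List (Equiv.Perm (Fin n)),
      (∀ x ∈ l, x ∈ gens n hn) ∧ l.prod = g ∧ l.length = d) ∧
  (∀ l : List (Equiv.Perm (Fin n)),
      (∀ x ∈ l, x ∈ gens n hn) → l.prod = g → d ≤ l.length)


/-- `Reach n hn s t F k`: some word of length `k` moves the pointer from `s` to `t`, realizing `F`. -/
def Reach (n : ℕ) (hn : 2 ≤ n) (s t : ℕ) (F : ℕ → ℕ) (k : ℕ) : Prop :=
  ∃ σ : Equiv.Perm (Fin n), (∀ x, (σ x).val = F x.val) ∧
    ∃ l : List (Equiv.Perm (Fin n)), (∀ x ∈ l, x ∈ gens n hn) ∧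
      (finRotate n) ^ s * l.prod = σ * (finRotate n) ^ t ∧ l.length = k

theorem rot_val (n : ℕ) (hn : 2 ≤ n) (x : Fin n) :
    (finRotate n x).val = if x.val + 1 = n then 0 else x.val + 1 := by
  obtain ⟨m, rfl⟩ : ∃ m, n = m + 1 := ⟨n - 1, by omega⟩
  rw [coe_finRotate]
  have := x.2
  by_cases h : x = Fin.last m
  · simp [h]
  · have h2 : x.val ≠ m := fun h' => h (Fin.ext h')
    rw [if_neg h, if_neg (by omega)]

theorem rot_pow_val (n : ℕ) (hn : 2 ≤ n) (k : ℕ) (x : Fin n) :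
    (((finRotate n) ^ k) x).val = (x.val + k) % n := by
  induction k with
  | zero => simp [Nat.mod_eq_of_lt x.2]
  | succ k ih =>
    rw [pow_succ', Equiv.Perm.mul_apply, rot_val n hn, ih]
    have h1 := Nat.mod_lt (x.val + k) (show 0 < n by omega)
    rw [← Nat.add_assoc, ← Nat.mod_add_mod (x.val + k) n 1]
    split_ifs with h
    · rw [h, Nat.mod_self]
    · rw [Nat.mod_eq_of_lt (by omega : (x.val + k) % n + 1 < n)]

theorem Reach.trans {n : ℕ} {hn : 2 ≤ n} {s t u : ℕ} {F G : ℕ → ℕ} {k k' : ℕ}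
    (h : Reach n hn s t F k) (h' : Reach n hn t u G k') :
    Reach n hn s u (fun x => F (G x)) (k + k') := by
  obtain ⟨σ, hσ, l, hl, hp, hk⟩ := h
  obtain ⟨σ', hσ', l', hl', hp', hk'⟩ := h'
  refine ⟨σ * σ', fun x => by simp [hσ, hσ'], l ++ l', ?_, ?_, by simp [hk, hk']⟩
  · intro x hx
    rcases List.mem_append.1 hx with h | h
    · exact hl x h
    · exact hl' x h
  · rw [List.prod_append, ← mul_assoc, hp, mul_assoc, hp', mul_assoc]

theorem gens_inv {n : ℕ} {hn : 2 ≤ n} {x : Equiv.Perm (Fin n)} (h : x ∈ gens n hn) :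
    x⁻¹ ∈ gens n hn := by
  simp only [gens, Set.mem_insert_iff, Set.mem_singleton_iff] at h ⊢
  rcases h with h | h | h
  · left; rw [h, delta, Equiv.swap_inv]
  · right; right; rw [h]
  · right; left; rw [h, inv_inv]

theorem Reach.symm {n : ℕ} {hn : 2 ≤ n} {s t : ℕ} {F : ℕ → ℕ} {k : ℕ}
    (h : Reach n hn s t F k) (hF : ∀ x, x < n → F (F x) = x) :
    Reach n hn t s F k := by
  obtain ⟨σ, hσ, l, hl, hp, hk⟩ := h
  have hss : σ * σ = 1 := by
    ext x
    simp [hσ, hF x.val x.2]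
  refine ⟨σ, hσ, (l.map (fun x => x⁻¹)).reverse, ?_, ?_, by simp [hk]⟩
  · intro x hx
    simp only [List.mem_reverse, List.mem_map] at hx
    obtain ⟨y, hy, rfl⟩ := hx
    exact gens_inv (hl y hy)
  · rw [← List.prod_inv_reverse, mul_inv_eq_iff_eq_mul, mul_assoc, hp, ← mul_assoc, hss, one_mul]

theorem Reach.right (n : ℕ) (hn : 2 ≤ n) (s d : ℕ) : Reach n hn s (s + d) (fun x => x) d := by
  refine ⟨1, fun x => rfl, List.replicate d (finRotate n), ?_, ?_, by simp⟩
  · intro x hx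
    rw [List.eq_of_mem_replicate hx]
    simp [gens]
  · simp [pow_add]

theorem Reach.left (n : ℕ) (hn : 2 ≤ n) (s d : ℕ) : Reach n hn (s + d) s (fun x => x) d :=
  (Reach.right n hn s d).symm (fun _ _ => rfl)

theorem Reach.swap (n : ℕ) (hn : 2 ≤ n) (s : ℕ) (hs : s + 1 < n) :
    Reach n hn s s (fun x => if x = s then s + 1 else if x = s + 1 then s else x) 1 := by
  refine ⟨Equiv.swap ⟨s, by omega⟩ ⟨s + 1, hs⟩, ?_, [delta n hn], ?_, ?_, rfl⟩
  · intro x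
    rw [Equiv.swap_apply_def]
    simp only [Fin.ext_iff]
    split_ifs <;> rfl
  · intro x hx
    rw [List.mem_singleton.1 hx]
    simp [gens]
  · rw [List.prod_singleton, delta, Equiv.mul_swap_eq_swap_mul]
    congr 2
    · ext; rw [rot_pow_val n hn]; simp [Nat.mod_eq_of_lt (show s < n by omega)]
    · ext; rw [rot_pow_val n hn]; simp [Nat.add_comm 1 s, Nat.mod_eq_of_lt hs]

theorem Reach.congr {n : ℕ} {hn : 2 ≤ n} {s t s' t' : ℕ} {F G : ℕ → ℕ} {k k' : ℕ}
    (h : Reach n hn s t F k) (hs : s = s') (ht : t = t') (hF : ∀ x, x < n → F x = G x)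
    (hk : k = k') : Reach n hn s' t' G k' := by
  subst hs ht hk
  obtain ⟨σ, hσ, h⟩ := h
  exact ⟨σ, fun x => by rw [hσ, hF _ x.2], h⟩

/-- right pass over the edges `l, ..., l+d` -/
theorem Reach.passR (n : ℕ) (hn : 2 ≤ n) (l d : ℕ) (h : l + d + 1 < n) :
    Reach n hn l (l + d)
      (fun x => if x = l + d + 1 then l else if l ≤ x ∧ x ≤ l + d then x + 1 else x) (2 * d + 1) := by
  induction d with
  | zero =>
    refine (Reach.swap n hn l (by omega)).congr rfl rfl ?_ rfl
    intro x hx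
    split_ifs <;> omega
  | succ d ih =>
    refine (((ih (by omega)).trans (Reach.right n hn (l + d) 1)).trans
      (Reach.swap n hn (l + d + 1) (by omega))).congr rfl (by omega) ?_ (by omega)
    intro x hx
    try dsimp only
    split_ifs <;> omega

/-- left pass over the edges `l+d, ..., l` -/
theorem Reach.passL (n : ℕ) (hn : 2 ≤ n) (l d : ℕ) (h : l + d + 1 < n) :
    Reach n hn (l + d) l
      (fun x => if x = l then l + d + 1 else if l < x ∧ x ≤ l + d + 1 then x - 1 else x)
      (2 * d + 1) := by
  induction d generalizing l with
  | zero =>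
    refine (Reach.swap n hn l (by omega)).congr rfl rfl ?_ rfl
    intro x hx
    split_ifs <;> omega
  | succ d ih =>
    refine (((ih (l + 1) (by omega)).trans (Reach.left n hn l 1)).trans
      (Reach.swap n hn l (by omega))).congr (by omega) (by omega) ?_ (by omega)
    intro x hx
    try dsimp only
    split_ifs <;> omega

/-- reversal of the block `[l, l+b)` -/
def revf (l b : ℕ) (x : ℕ) : ℕ := if l ≤ x ∧ x < l + b then 2 * l + b - 1 - x else x

theorem zig (n : ℕ) (hn : 2 ≤ n) (b : ℕ) : ∀ l, l + (b + 2) ≤ n →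
    Reach n hn l (l + (b + 2) / 2 - 1) (revf l (b + 2)) ((b + 2) * (b + 1) - 1) ∧
    Reach n hn (l + b) (l + (b + 3) / 2 - 1) (revf l (b + 2)) ((b + 2) * (b + 1) - 1) := by
  induction b with
  | zero =>
    intro l hl
    constructor <;>
    · refine (Reach.swap n hn l (by omega)).congr (by omega) (by omega) ?_ (by omega)
      intro x hx
      unfold revf
      split_ifs <;> omega
  | succ b ih =>
    intro l hl
    have e : (b + 1 + 2) * (b + 1 + 1) - 1 = 2 * (b + 1) + 1 + 1 + ((b + 2) * (b + 1) - 1) := by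
      have : 1 ≤ (b + 2) * (b + 1) := Nat.mul_pos (by omega) (by omega)
      have h2 : (b + 1 + 2) * (b + 1 + 1) = (b + 2) * (b + 1) + 2 * (b + 2) := by ring
      omega
    constructor
    · refine (((Reach.passR n hn l (b + 1) (by omega)).trans (Reach.left n hn (l + b) 1)).trans
        (ih l (by omega)).2).congr rfl (by omega) ?_ e.symm
      intro x hx
      unfold revf
      try dsimp only
      split_ifs <;> omega
    · refine (((Reach.passL n hn l (b + 1) (by omega)).trans (Reach.right n hn l 1)).trans
        (ih (l + 1) (by omega)).1).congr rfl (by omega) ?_ e.symm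
      intro x hx
      unfold revf
      try dsimp only
      split_ifs <;> omega

theorem revf_invol (l b x : ℕ) : revf l b (revf l b x) = x := by
  unfold revf
  split_ifs <;> omega

theorem upper_aux (n : ℕ) (hn : 2 ≤ n) (i b s t k : ℕ) (hi : i ≤ n) (hi1 : 1 ≤ i)
    (hb1 : 1 ≤ b) (hb : b < n)
    (hst : s + t = b + n - i) (hs : s < n) (ht : t < n)
    (h : Reach n hn s t (fun x => revf 0 b (revf b (n - b) x)) k) :
    ∃ l : List (Equiv.Perm (Fin n)), (∀ x ∈ l, x ∈ gens n hn) ∧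
      l.prod = ((Fin.revPerm : Equiv.Perm (Fin n)) * (finRotate n) ^ (n - i))⁻¹ ∧
      l.length = k := by
  obtain ⟨σ, hσ, l, hl, hp, hk⟩ := h
  refine ⟨l, hl, ?_, hk⟩
  rw [eq_inv_iff_mul_eq_one, ← mul_right_inj ((finRotate n) ^ s), ← mul_assoc, hp, mul_one]
  ext x
  have hx := x.2
  have key : ∀ a, a < 2 * n → a % n = if a < n then a else a - n := by
    intro a ha
    split_ifs with h
    · exact Nat.mod_eq_of_lt h
    · rw [Nat.mod_eq_sub_mod (by omega), Nat.mod_eq_of_lt (by omega)]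
  simp only [Equiv.Perm.mul_apply, hσ, rot_pow_val n hn, Fin.revPerm_apply, Fin.val_rev]
  rw [key (x.val + (n - i)) (by omega), key (x.val + s) (by omega)]
  split_ifs <;> rw [key _ (by omega)] <;> unfold revf <;> split_ifs <;> omega

theorem upper (n : ℕ) (hn : 4 ≤ n) (hn2 : 2 ≤ n) (i : ℕ) (hi1 : (n + 1) / 2 + 2 ≤ i) (hi2 : i ≤ n) :
    ∃ l : List (Equiv.Perm (Fin n)), (∀ x ∈ l, x ∈ gens n hn2) ∧
      l.prod = ((Fin.revPerm : Equiv.Perm (Fin n)) * (finRotate n) ^ (n - i))⁻¹ ∧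
      l.length = (((n + 1) / 2 * ((n + 1) / 2 - 1) - 1) + (n / 2 * (n / 2 - 1) - 1)
        + (i - (n + 1) / 2)) := by
  obtain ⟨b, b', hbn, hbf, hb2, hb2', hcase⟩ : ∃ b b', b + 2 + (b' + 2) = n ∧
      (b + 3) / 2 + (b' + 2) / 2 = n / 2 ∧ (b' + 2) / 2 ≤ (b + 3) / 2 ∧ True ∧
      ((b + 2 = n / 2 ∧ b' + 2 = (n + 1) / 2) ∨ (b' + 2 = n / 2 ∧ b + 2 = (n + 1) / 2)) := by
    by_cases h : n % 4 = 3
    · exact ⟨(n + 1) / 2 - 2, n / 2 - 2, by omega, by omega, by omega, trivial, by omega⟩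
    · exact ⟨n / 2 - 2, (n + 1) / 2 - 2, by omega, by omega, by omega, trivial, by omega⟩
  have hlen : ((n + 1) / 2 * ((n + 1) / 2 - 1) - 1) + (n / 2 * (n / 2 - 1) - 1)
      = ((b + 2) * (b + 1) - 1) + ((b' + 2) * (b' + 1) - 1) := by
    rcases hcase with ⟨h1, h2⟩ | ⟨h1, h2⟩
    · rw [← h1, ← h2]; simp only [Nat.add_sub_cancel, show b + 2 - 1 = b + 1 by omega,
        show b' + 2 - 1 = b' + 1 by omega]; omega
    · rw [← h1, ← h2]; simp only [show b + 2 - 1 = b + 1 by omega,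
        show b' + 2 - 1 = b' + 1 by omega]
  rw [hlen]
  have hL := ((zig n hn2 b 0 (by omega)).2).symm (fun x _ => revf_invol _ _ _)
  have hR := (zig n hn2 b' (b + 2) (by omega)).1
  have hR' := hR.symm (fun x _ => revf_invol _ _ _)
  have hnb : n - (b + 2) = b' + 2 := by omega
  by_cases h : n - i < (b' + 2) / 2 - 1
  · refine upper_aux n hn2 i (b + 2) (n - i) (b + 2) _ hi2 (by omega) (by omega) (by omega) (by omega)
      (by omega) (by omega) ?_
    have h1 := Reach.right n hn2 (n - i) (0 + (b + 3) / 2 - 1 - (n - i))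
    have h2 := h1.congr (k' := 0 + (b + 3) / 2 - 1 - (n - i)) rfl
      (show _ = 0 + (b + 3) / 2 - 1 by omega) (fun x _ => rfl) rfl
    have h3 := (h2.trans hL).trans ((Reach.right n hn2 (0 + b) (2 + (b' + 2) / 2 - 1)).congr rfl
      (show _ = b + 2 + (b' + 2) / 2 - 1 by omega) (fun x _ => rfl) rfl)
    refine (h3.trans hR').congr rfl rfl (fun x _ => by rw [hnb]) (by omega)
  · refine upper_aux n hn2 i (b + 2) (n - i - ((b' + 2) / 2 - 1)) (b + 2 + (b' + 2) / 2 - 1) _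
      hi2 (by omega) (by omega) (by omega) (by omega) (by omega) (by omega) ?_
    have h1 := Reach.right n hn2 (n - i - ((b' + 2) / 2 - 1))
      (0 + (b + 3) / 2 - 1 - (n - i - ((b' + 2) / 2 - 1)))
    have h2 := h1.congr rfl
      (show _ = 0 + (b + 3) / 2 - 1 by omega) (fun x _ => rfl) rfl
    have h3 := (h2.trans hL).trans ((Reach.right n hn2 (0 + b) 2).congr rfl
      (show _ = b + 2 by omega) (fun x _ => rfl) rfl)
    refine (h3.trans hR).congr rfl rfl (fun x _ => by rw [hnb]) (by omega)

/-- letters of words -/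
inductive Stp where
  | R : Stp
  | L : Stp
  | X : Stp

/-- evaluation of letters -/
def evS (n : ℕ) (hn : 2 ≤ n) : Stp → Equiv.Perm (Fin n)
  | Stp.R => finRotate n
  | Stp.L => (finRotate n)⁻¹
  | Stp.X => delta n hn

/-- position update -/
def ps (n : ℕ) : Stp → ℕ → ℕ
  | Stp.R, p => if p = 0 then n - 1 else p - 1
  | Stp.L, p => if p = n - 1 then 0 else p + 1
  | Stp.X, p => if p = 0 then 1 else if p = 1 then 0 else p

/-- position after a word -/
def pos (n : ℕ) : List Stp → ℕ → ℕ
  | [], p => p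
  | s :: w, p => pos n w (ps n s p)

/-- pointer displacement of a letter -/
def dS : Stp → ℤ
  | Stp.R => 1
  | Stp.L => -1
  | Stp.X => 0

/-- pointer displacement -/
def ptr : List Stp → ℤ
  | [] => 0
  | s :: w => dS s + ptr w

/-- number of swaps of a letter -/
def xS : Stp → ℕ
  | Stp.R => 0
  | Stp.L => 0
  | Stp.X => 1

/-- number of swaps -/
def nX : List Stp → ℕ
  | [] => 0
  | s :: w => xS s + nX w

/-- number of moves -/
def mv : List Stp → ℕ
  | [] => 0
  | s :: w => (1 - xS s) + mv w

theorem len_eq (w : List Stp) : w.length = nX w + mv w := by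
  induction w with
  | nil => rfl
  | cons s w ih => cases s <;> simp [nX, mv, xS, ih] <;> omega

theorem pos_append (n : ℕ) (w v : List Stp) (p : ℕ) : pos n (w ++ v) p = pos n v (pos n w p) := by
  induction w generalizing p with
  | nil => rfl
  | cons s w ih => simp [pos, ih]

theorem ptr_append (w v : List Stp) : ptr (w ++ v) = ptr w + ptr v := by
  induction w with
  | nil => simp [ptr]
  | cons s w ih => simp [ptr, ih]; ring

theorem mv_append (w v : List Stp) : mv (w ++ v) = mv w + mv v := by
  induction w with
  | nil => simp [mv]
  | cons s w ih => simp [mv, ih]; ring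

theorem rot_inv_val (n : ℕ) (hn : 2 ≤ n) (x : Fin n) :
    ((finRotate n)⁻¹ x).val = if x.val = 0 then n - 1 else x.val - 1 := by
  obtain ⟨y, rfl⟩ := (finRotate n).surjective x
  rw [show (finRotate n)⁻¹ (finRotate n y) = y from (finRotate n).symm_apply_apply y]
  have := y.2
  have h := rot_val n hn y
  by_cases h1 : y.val + 1 = n
  · rw [if_pos h1] at h
    rw [h, if_pos rfl]; omega
  · rw [if_neg h1] at h
    rw [h, if_neg (by omega)]; omega

theorem evS_inv (n : ℕ) (hn : 2 ≤ n) (s : Stp) (x : Fin n) :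
    ((evS n hn s)⁻¹ x).val = ps n s x.val := by
  cases s with
  | R => exact rot_inv_val n hn x
  | L =>
    simp only [evS, inv_inv, ps]
    rw [rot_val n hn]
    split_ifs <;> omega
  | X =>
    simp only [evS, delta, Equiv.swap_inv, ps, Equiv.swap_apply_def, Fin.ext_iff]
    split_ifs <;> rfl

theorem pos_eq (n : ℕ) (hn : 2 ≤ n) (w : List Stp) (x : Fin n) :
    (((w.map (evS n hn)).prod)⁻¹ x).val = pos n w x.val := by
  induction w generalizing x with
  | nil => simp [pos]
  | cons s w ih =>
    simp only [List.map_cons, List.prod_cons, mul_inv_rev, Equiv.Perm.mul_apply, pos]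
    rw [ih, evS_inv]

theorem exists_stp (n : ℕ) (hn : 2 ≤ n) (l : List (Equiv.Perm (Fin n)))
    (hl : ∀ x ∈ l, x ∈ gens n hn) : ∃ w : List Stp, w.map (evS n hn) = l := by
  induction l with
  | nil => exact ⟨[], rfl⟩
  | cons g l ih =>
    obtain ⟨w, hw⟩ := ih (fun x hx => hl x (List.mem_cons_of_mem _ hx))
    have hg := hl g List.mem_cons_self
    simp only [gens, Set.mem_insert_iff, Set.mem_singleton_iff] at hg
    rcases hg with h | h | h
    · exact ⟨Stp.X :: w, by simp [evS, hw, h]⟩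
    · exact ⟨Stp.R :: w, by simp [evS, hw, h]⟩
    · exact ⟨Stp.L :: w, by simp [evS, hw, h]⟩

theorem ps_lt (n : ℕ) (hn : 2 ≤ n) (s : Stp) (p : ℕ) (hp : p < n) : ps n s p < n := by
  cases s <;> simp only [ps] <;> split_ifs <;> omega

theorem pos_lt (n : ℕ) (hn : 2 ≤ n) (w : List Stp) (p : ℕ) (hp : p < n) : pos n w p < n := by
  induction w generalizing p with
  | nil => exact hp
  | cons s w ih => exact ih _ (ps_lt n hn s p hp)

theorem ps_inj (n : ℕ) (hn : 2 ≤ n) (s : Stp) (p q : ℕ) (hp : p < n) (hq : q < n)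
    (h : ps n s p = ps n s q) : p = q := by
  cases s <;> simp only [ps] at h <;> split_ifs at h <;> omega

theorem sum_ps (n : ℕ) (hn : 2 ≤ n) (s : Stp) (f : ℕ → ℤ) :
    ∑ p ∈ Finset.range n, f (ps n s p) = ∑ p ∈ Finset.range n, f p := by
  have hmaps : ∀ p ∈ Finset.range n, ps n s p ∈ Finset.range n := by
    intro p hp
    rw [Finset.mem_range] at *
    exact ps_lt n hn s p hp
  have hinj : Set.InjOn (ps n s) (Finset.range n : Set ℕ) := by
    intro p hp q hq h
    simp only [Finset.coe_range, Set.mem_Iio] at hp hq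
    exact ps_inj n hn s p q hp hq h
  refine Finset.sum_nbij (ps n s) hmaps hinj ?_ (fun _ _ => rfl)
  exact Finset.surjOn_of_injOn_of_card_le _ hmaps hinj le_rfl

theorem sum_pos' (n : ℕ) (hn : 2 ≤ n) (w : List Stp) (f : ℕ → ℤ) :
    ∑ p ∈ Finset.range n, f (pos n w p) = ∑ p ∈ Finset.range n, f p := by
  induction w with
  | nil => rfl
  | cons s w ih =>
    rw [← ih, ← sum_ps n hn s (fun p => f (pos n w p))]
    rfl

/-- cyclic orientation -/
def orr (x y z : ℕ) : Prop := (x < y ∧ y < z) ∨ (y < z ∧ z < x) ∨ (z < x ∧ x < y)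

theorem orr_ps (n : ℕ) (hn : 2 ≤ n) (s : Stp) (x y z : ℕ) (hx : x < n) (hy : y < n) (hz : z < n)
    (hxy : x ≠ y) (hyz : y ≠ z) (hzx : z ≠ x)
    (h : xS s = 0 ∨ ((1 < x ∨ 1 < y) ∧ (1 < y ∨ 1 < z) ∧ (1 < z ∨ 1 < x))) :
    orr (ps n s x) (ps n s y) (ps n s z) ↔ orr x y z := by
  cases s with
  | R =>
    clear h
    simp only [ps, orr]; split_ifs <;> omega
  | L =>
    clear h
    simp only [ps, orr]; split_ifs <;> omega
  | X =>
    simp only [xS] at h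
    have h := h.resolve_left (by omega)
    simp only [ps, orr]; split_ifs <;> omega

theorem swaps_aux (n : ℕ) (hn : 2 ≤ n) (w : List Stp) : ∀ e : Fin n → ℕ, (∀ z, e z < n) →
    Function.Injective e → ∃ S : Finset (Sym2 (Fin n)), S.card ≤ nX w ∧
      ∀ a b c, a ≠ b → b ≠ c → c ≠ a → s(a, b) ∉ S → s(b, c) ∉ S → s(c, a) ∉ S →
        (orr (pos n w (e a)) (pos n w (e b)) (pos n w (e c)) ↔ orr (e a) (e b) (e c)) := by
  induction w with
  | nil =>
    intro e _ _
    exact ⟨∅, by simp, fun a b c _ _ _ _ _ _ => Iff.rfl⟩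
  | cons s w ih =>
    intro e he hinj
    obtain ⟨S, hS, hab⟩ := ih (fun z => ps n s (e z)) (fun z => ps_lt n hn s _ (he z))
      (fun a b h => hinj (ps_inj n hn s _ _ (he a) (he b) h))
    have main : ∀ T : Finset (Sym2 (Fin n)), S ⊆ T →
        (xS s = 0 ∨ ∀ a b, e a = 0 → e b = 1 → s(a, b) ∈ T) →
        ∀ a b c, a ≠ b → b ≠ c → c ≠ a → s(a, b) ∉ T → s(b, c) ∉ T → s(c, a) ∉ T →
        (orr (pos n (s :: w) (e a)) (pos n (s :: w) (e b)) (pos n (s :: w) (e c)) ↔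
          orr (e a) (e b) (e c)) := by
      intro T hST hT a b c h1 h2 h3 h4 h5 h6
      refine (hab a b c h1 h2 h3 (fun h => h4 (hST h)) (fun h => h5 (hST h))
        (fun h => h6 (hST h))).trans ?_
      have i1 := hinj.ne h1
      have i2 := hinj.ne h2
      have i3 := hinj.ne h3
      refine orr_ps n hn s _ _ _ (he a) (he b) (he c) i1 i2 i3 ?_
      rcases hT with hT | hT
      · exact Or.inl hT
      · right
        have aux : ∀ u v, e u ≠ e v → s(u, v) ∉ T → 1 < e u ∨ 1 < e v := by
          intro u v huv hm
          by_contra hcon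
          have : (e u = 0 ∧ e v = 1) ∨ (e v = 0 ∧ e u = 1) := by omega
          rcases this with ⟨q1, q2⟩ | ⟨q1, q2⟩
          · exact hm (hT _ _ q1 q2)
          · exact hm (Sym2.eq_swap ▸ hT _ _ q1 q2)
        exact ⟨aux _ _ i1 h4, aux _ _ i2 h5, aux _ _ i3 h6⟩
    by_cases hs : xS s = 0
    · exact ⟨S, by simp [nX, hs, hS], main S (Finset.Subset.refl _) (Or.inl hs)⟩
    · have hs1 : xS s = 1 := by cases s <;> simp_all [xS]
      by_cases hex : ∃ a b, e a = 0 ∧ e b = 1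
      · obtain ⟨a, b, ha, hb⟩ := hex
        refine ⟨insert s(a, b) S, ?_, main _ (Finset.subset_insert _ _) (Or.inr ?_)⟩
        · have := Finset.card_insert_le s(a, b) S
          simp only [nX, hs1]; omega
        · intro a' b' ha' hb'
          rw [hinj (ha'.trans ha.symm), hinj (hb'.trans hb.symm)]
          exact Finset.mem_insert_self _ _
      · refine ⟨S, by simp only [nX]; omega, main S (Finset.Subset.refl _) (Or.inr ?_)⟩
        intro a b ha hb
        exact absurd ⟨a, b, ha, hb⟩ hex

/-- final position function -/
def fin_pos (n i z : ℕ) : ℕ := if z < i then i - 1 - z else n - 1 + i - z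

theorem fin_flip (n i : ℕ) (hi : i ≤ n) (x y z : ℕ) (hx : x < n) (hy : y < n) (hz : z < n)
    (hxy : x ≠ y) (hyz : y ≠ z) (hzx : z ≠ x) :
    ¬ (orr (fin_pos n i x) (fin_pos n i y) (fin_pos n i z) ↔ orr x y z) := by
  simp only [fin_pos, orr]; split_ifs <;> omega

theorem swaps_bound (n : ℕ) (hn : 2 ≤ n) (i : ℕ) (hi : i ≤ n) (w : List Stp)
    (hw : ∀ z, z < n → pos n w z = fin_pos n i z) : n * (n - 1) / 2 ≤ nX w + n * n / 4 := by
  classical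
  obtain ⟨S, hS, hab⟩ := swaps_aux n hn w (fun z => z.val) (fun z => z.2) Fin.val_injective
  let G : SimpleGraph (Fin n) := (⊤ : SimpleGraph (Fin n)).deleteEdges (S : Set (Sym2 (Fin n)))
  have hG : G.CliqueFree 3 := by
    intro t ht
    rw [SimpleGraph.is3Clique_iff] at ht
    obtain ⟨a, b, c, h1, h2, h3, -⟩ := ht
    simp only [G, SimpleGraph.deleteEdges_adj, SimpleGraph.top_adj, Finset.mem_coe] at h1 h2 h3
    have h := hab a b c h1.1 h3.1 h2.1.symm h1.2 h3.2 (Sym2.eq_swap ▸ h2.2)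
    rw [hw _ a.2, hw _ b.2, hw _ c.2] at h
    exact fin_flip n i hi a b c a.2 b.2 c.2 (Fin.val_injective.ne h1.1)
      (Fin.val_injective.ne h3.1) (Fin.val_injective.ne h2.1.symm) h
  have h1 := hG.card_edgeFinset_le
  have h2 : (⊤ : SimpleGraph (Fin n)).edgeFinset.card - S.card ≤ G.edgeFinset.card := by
    have : G.edgeFinset = (⊤ : SimpleGraph (Fin n)).edgeFinset \ S := by
      ext e
      simp [G, SimpleGraph.edgeSet_deleteEdges]
    rw [this]
    exact Finset.le_card_sdiff _ _
  rw [SimpleGraph.card_edgeFinset_top_eq_card_choose_two, Fintype.card_fin, Nat.choose_two_right] at h2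
  have h3 : G.edgeFinset.card ≤ n * n / 4 := by
    refine le_trans h1 ?_
    rw [Fintype.card_fin]
    have h4 : (n % 2).choose 2 = 0 := Nat.choose_eq_zero_of_lt (Nat.mod_lt _ (by norm_num))
    rw [h4, pow_two n]
    norm_num
    exact Nat.div_le_div_right (Nat.sub_le _ _)
  omega

theorem dvdeq {a b c : ℤ} (h : a ∣ b) (e : c = b) : a ∣ c := e ▸ h

/-- positions 0 and 1 are identified -/
def bar (p : ℕ) : ℤ := if p = 0 then 1 else p

theorem seg (n : ℕ) (hn : 2 ≤ n) (w : List Stp) : ∃ Δ : ℕ → ℤ,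
    ∑ p ∈ Finset.range n, |Δ p| ≤ mv w ∧
    ∀ p, p < n → ((n : ℤ) - 1) ∣ Δ p - (ptr w + bar (pos n w p) - bar p) := by
  induction w with
  | nil => exact ⟨fun _ => 0, by simp, fun p _ => by simp [ptr, pos]⟩
  | cons s w ih =>
    obtain ⟨Δ, h1, h2⟩ := ih
    obtain ⟨d, h3, h4⟩ : ∃ d : ℕ → ℤ, ∑ p ∈ Finset.range n, |d p| ≤ ((1 - xS s : ℕ) : ℤ) ∧
        ∀ p, p < n → ((n : ℤ) - 1) ∣ d p - (dS s + bar (ps n s p) - bar p) := by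
      cases s with
      | R =>
        refine ⟨fun p => if p = 1 then 1 else 0, ?_, ?_⟩
        · rw [Finset.sum_eq_single 1]
          · simp [xS]
          · intro b _ hb; simp [hb]
          · intro h; simp at h; omega
        · intro p hp
          by_cases h0 : p = 0
          · subst h0
            refine ⟨-1, ?_⟩
            simp [ps, bar, dS, show n - 1 ≠ 0 by omega]
            rw [Nat.cast_sub (by omega)]; simp
          · by_cases h1 : p = 1
            · subst h1; simp [ps, bar, dS]
            · simp [ps, bar, dS, h0, h1, show p - 1 ≠ 0 by omega]
              rw [Nat.cast_sub (by omega)]; simp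
      | L =>
        refine ⟨fun p => if p = 0 then -1 else 0, ?_, ?_⟩
        · rw [Finset.sum_eq_single 0]
          · simp [xS]
          · intro b _ hb; simp [hb]
          · intro h; simp at h; omega
        · intro p hp
          by_cases h0 : p = 0
          · subst h0
            simp [ps, bar, dS, show 0 ≠ n - 1 by omega]
          · by_cases h1 : p = n - 1
            · refine ⟨1, ?_⟩
              simp [ps, bar, dS, h0, h1, show n - 1 ≠ 0 by omega]
              rw [Nat.cast_sub (by omega)]; simp
            · simp [ps, bar, dS, h0, h1]
      | X =>
        refine ⟨fun p => 0, by simp, ?_⟩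
        intro p hp
        have : bar (ps n Stp.X p) = bar p := by
          simp only [ps, bar]
          split_ifs <;> simp_all
        rw [this]; simp [dS]
    refine ⟨fun p => d p + Δ (ps n s p), ?_, ?_⟩
    · calc ∑ p ∈ Finset.range n, |d p + Δ (ps n s p)|
          ≤ ∑ p ∈ Finset.range n, (|d p| + |Δ (ps n s p)|) :=
            Finset.sum_le_sum (fun p _ => abs_add_le _ _)
        _ = ∑ p ∈ Finset.range n, |d p| + ∑ p ∈ Finset.range n, |Δ p| := by
            rw [Finset.sum_add_distrib, sum_ps n hn s (fun p => |Δ p|)]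
        _ ≤ _ := by simp only [mv]; push_cast at h3 ⊢; linarith
    · intro p hp
      have := dvd_add (h4 p hp) (h2 _ (ps_lt n hn s p hp))
      refine dvdeq this ?_
      simp only [ptr, pos]; ring

/-- pointers visited -/
def vis : List Stp → ℤ → Finset ℤ
  | [], a => {a}
  | s :: w, a => insert a (vis w (a + dS s))

theorem vis_self (w : List Stp) (a : ℤ) : a ∈ vis w a := by
  cases w <;> simp [vis]

theorem traverse (w : List Stp) (τ : ℤ) : ∀ a : ℤ, (∃ u ∈ vis w a, u ≤ τ) →
    (∃ v ∈ vis w a, τ + 1 ≤ v) → ∃ w1 s w2, w = w1 ++ s :: w2 ∧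
      ((s = Stp.R ∧ a + ptr w1 = τ) ∨ (s = Stp.L ∧ a + ptr w1 = τ + 1)) := by
  induction w with
  | nil =>
    rintro a ⟨u, hu, hu'⟩ ⟨v, hv, hv'⟩
    simp [vis] at hu hv
    omega
  | cons s w ih =>
    rintro a ⟨u, hu, hu'⟩ ⟨v, hv, hv'⟩
    by_cases h0 : (s = Stp.R ∧ a = τ) ∨ (s = Stp.L ∧ a = τ + 1)
    · exact ⟨[], s, w, rfl, by simpa [ptr] using h0⟩
    · have hself := vis_self w (a + dS s)
      simp only [vis, Finset.mem_insert] at hu hv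
      have key : ∃ w1 s' w2, w = w1 ++ s' :: w2 ∧
        ((s' = Stp.R ∧ (a + dS s) + ptr w1 = τ) ∨ (s' = Stp.L ∧ (a + dS s) + ptr w1 = τ + 1)) := by
        apply ih
        · rcases hu with rfl | hu
          · refine ⟨_, hself, ?_⟩
            cases s <;> simp [dS] at h0 ⊢ <;> omega
          · exact ⟨u, hu, hu'⟩
        · rcases hv with rfl | hv
          · refine ⟨_, hself, ?_⟩
            cases s <;> simp [dS] at h0 ⊢ <;> omega
          · exact ⟨v, hv, hv'⟩
      obtain ⟨w1, s', w2, rfl, h⟩ := key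
      refine ⟨s :: w1, s', w2, rfl, ?_⟩
      simp only [ptr, ← add_assoc]
      exact h

theorem untouched (n : ℕ) (hn : 2 ≤ n) (α β : ℤ) (hαβ : β - α + 4 ≤ n) (w : List Stp) :
    ∀ (a : ℤ) (x y z : ℕ), x < n → y < n → z < n → x ≠ y → y ≠ z → z ≠ x →
      (∀ u ∈ vis w a, α ≤ u ∧ u ≤ β) → (n : ℤ) ∣ a + x - (β + 2) → (n : ℤ) ∣ a + y - (β + 3) →
      (orr (pos n w x) (pos n w y) (pos n w z) ↔ orr x y z) := by
  induction w with
  | nil => intros; exact Iff.rfl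
  | cons s w ih =>
    intro a x y z hx hy hz hxy hyz hzx hv h1 h2
    have ha := hv a (vis_self _ _)
    have step : ∀ p : ℕ, p < n → ∀ b : ℤ, (n : ℤ) ∣ a + p - b → (xS s = 0 ∨ 1 < p) →
        (n : ℤ) ∣ (a + dS s) + (ps n s p : ℕ) - b := by
      intro p hp b hb hsp
      cases s with
      | R =>
        simp only [ps, dS]
        split_ifs with h
        · subst h
          rw [Nat.cast_sub (by omega)]
          have := dvd_add hb (dvd_refl (n : ℤ))
          refine dvdeq this ?_
          push_cast; ring
        · rw [Nat.cast_sub (by omega)]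
          refine dvdeq hb ?_
          push_cast; ring
      | L =>
        simp only [ps, dS]
        split_ifs with h
        · subst h
          rw [Nat.cast_sub (by omega)] at hb
          have := dvd_sub hb (dvd_refl (n : ℤ))
          refine dvdeq this ?_
          push_cast; ring
        · refine dvdeq hb ?_
          push_cast; ring
      | X =>
        simp only [xS] at hsp
        simp only [ps, dS]
        rw [if_neg (by omega), if_neg (by omega)]
        simpa using hb
    have small : ∀ t : ℤ, (n : ℤ) ∣ t → -n < t → t < 0 → False := by
      intro t ht h1 h2
      obtain ⟨k, rfl⟩ := ht
      have hk1 : k < 0 := by nlinarith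
      nlinarith
    have hx1 : 1 < x := by
      by_contra hc
      exact small _ h1 (by omega) (by omega)
    have hy1 : 1 < y := by
      by_contra hc
      exact small _ h2 (by omega) (by omega)
    refine (ih (a + dS s) (ps n s x) (ps n s y) (ps n s z) (ps_lt n hn s _ hx) (ps_lt n hn s _ hy)
      (ps_lt n hn s _ hz) (fun h => hxy (ps_inj n hn s _ _ hx hy h))
      (fun h => hyz (ps_inj n hn s _ _ hy hz h)) (fun h => hzx (ps_inj n hn s _ _ hz hx h))
      ?_ (step x hx _ h1 (Or.inr hx1)) (step y hy _ h2 (Or.inr hy1))).trans ?_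
    · intro u hu
      exact hv u (by simp [vis, hu])
    · exact orr_ps n hn s x y z hx hy hz hxy hyz hzx (Or.inr ⟨Or.inl hx1, Or.inl hy1, Or.inr hx1⟩)

theorem range_bound (n : ℕ) (hn : 5 ≤ n) (i : ℕ) (hi : i ≤ n) (w : List Stp)
    (hw : ∀ z, z < n → pos n w z = fin_pos n i z) :
    ∃ α, (∃ u ∈ vis w 0, u ≤ α) ∧ ∃ v ∈ vis w 0, α + (n / 2 : ℕ) ≤ v := by
  have hne : (vis w 0).Nonempty := ⟨_, vis_self w 0⟩
  set α := (vis w 0).min' hne with hα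
  set β := (vis w 0).max' hne with hβ
  refine ⟨α, ⟨α, Finset.min'_mem _ _, le_rfl⟩, β, Finset.max'_mem _ _, ?_⟩
  by_contra hcon
  have hcon : β - α + 1 ≤ (n / 2 : ℕ) := by omega
  have hn0 : (0 : ℤ) < n := by omega
  have hex : ∀ b : ℤ, ∃ x : ℕ, x < n ∧ (n : ℤ) ∣ 0 + x - b := by
    intro b
    have h0 := Int.emod_nonneg b hn0.ne'
    have h1 := Int.emod_lt_of_pos b hn0
    refine ⟨(b % n).toNat, by omega, ?_⟩
    rw [Int.toNat_of_nonneg h0, zero_add]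
    exact ⟨-(b / n), by have := Int.emod_add_mul_ediv b n; linarith⟩
  obtain ⟨x, hx, hx'⟩ := hex (β + 2)
  obtain ⟨y, hy, hy'⟩ := hex (β + 3)
  have hxy : x ≠ y := by
    rintro rfl
    have := dvd_sub hx' hy'
    ring_nf at this
    have := Int.le_of_dvd (by norm_num) this
    omega
  obtain ⟨z, hz, h1, h2⟩ : ∃ z, z < n ∧ y ≠ z ∧ z ≠ x := by
    by_cases q0 : y ≠ 0 ∧ x ≠ 0
    · exact ⟨0, by omega, by omega, by omega⟩
    by_cases q1 : y ≠ 1 ∧ x ≠ 1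
    · exact ⟨1, by omega, by omega, by omega⟩
    exact ⟨2, by omega, by omega, by omega⟩
  have h := untouched n (by omega) α β (by omega) w 0 x y z hx hy hz hxy h1 h2
    (fun u hu => ⟨Finset.min'_le _ _ hu, Finset.le_max' _ _ hu⟩) hx' hy'
  rw [hw x hx, hw y hy, hw z hz] at h
  exact fin_flip n i hi x y z hx hy hz hxy h1 h2 h

/-- slot function -/
def gg (p : ℕ) : ℤ := if p = 1 then 3 else 2 * bar p

theorem bar_R (n : ℕ) (hn : 2 ≤ n) (p : ℕ) (hp : p < n) :
    ((n : ℤ) - 1) ∣ 1 + bar (ps n Stp.R p) - (gg p - bar p) := by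
  unfold gg
  by_cases h0 : p = 0
  · subst h0
    refine ⟨1, ?_⟩
    simp [ps, bar, show n - 1 ≠ 0 by omega]
    rw [Nat.cast_sub (by omega)]; simp
  · by_cases h1 : p = 1
    · subst h1; simp [ps, bar]
    · simp [ps, bar, h0, h1, show p - 1 ≠ 0 by omega]
      rw [Nat.cast_sub (by omega)]
      push_cast; ring_nf; simp

theorem ps_LR (n : ℕ) (hn : 2 ≤ n) (p : ℕ) (hp : p < n) : ps n Stp.R (ps n Stp.L p) = p := by
  simp only [ps]
  by_cases h : p = n - 1
  · simp [h]
  · simp [h]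

theorem cut (n : ℕ) (hn : 2 ≤ n) (w : List Stp) (τ : ℤ)
    (h : ∃ w1 s w2, w = w1 ++ s :: w2 ∧
      ((s = Stp.R ∧ 0 + ptr w1 = τ) ∨ (s = Stp.L ∧ 0 + ptr w1 = τ + 1))) :
    ∃ (v : List Stp) (Δ : ℕ → ℤ), ∑ z ∈ Finset.range n, |Δ z| + 1 ≤ mv w ∧
      ∀ z, z < n → ((n : ℤ) - 1) ∣
        Δ z - (2 * τ + gg (pos n v z) - ptr w - bar z - bar (pos n w z)) := by
  obtain ⟨w1, s, w2, rfl, h⟩ := h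
  obtain ⟨Δ1, h1, h1'⟩ := seg n hn w1
  obtain ⟨Δ2, h2, h2'⟩ := seg n hn w2
  have hs1 : xS s = 0 := by rcases h with ⟨rfl, _⟩ | ⟨rfl, _⟩ <;> rfl
  have hsum : ∑ z ∈ Finset.range n, |Δ1 z - Δ2 (ps n s (pos n w1 z))| + 1 ≤
      mv (w1 ++ s :: w2) := by
    have e : ∑ z ∈ Finset.range n, |Δ2 (ps n s (pos n w1 z))| = ∑ z ∈ Finset.range n, |Δ2 z| := by
      rw [sum_pos' n hn w1 (fun p => |Δ2 (ps n s p)|), sum_ps n hn s (fun p => |Δ2 p|)]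
    have e2 : ∑ z ∈ Finset.range n, |Δ1 z - Δ2 (ps n s (pos n w1 z))| ≤
        ∑ z ∈ Finset.range n, (|Δ1 z| + |Δ2 (ps n s (pos n w1 z))|) :=
      Finset.sum_le_sum (fun z _ => abs_sub _ _)
    rw [Finset.sum_add_distrib, e] at e2
    rw [mv_append]
    simp only [mv, hs1]
    push_cast
    linarith
  rcases h with ⟨rfl, h⟩ | ⟨rfl, h⟩
  · refine ⟨w1, _, hsum, ?_⟩
    intro z hz
    have a1 := h1' z hz
    have hp := pos_lt n hn w1 z hz
    have a2 := h2' _ (ps_lt n hn Stp.R _ hp)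
    have a3 := bar_R n hn _ hp
    have := dvd_add (dvd_sub a1 a2) a3
    refine dvdeq this ?_
    rw [pos_append, ptr_append]
    simp only [pos, ptr, dS]
    rw [← h]; ring
  · refine ⟨w1 ++ [Stp.L], _, hsum, ?_⟩
    intro z hz
    have a1 := h1' z hz
    have hp := pos_lt n hn w1 z hz
    have hp2 := ps_lt n hn Stp.L _ hp
    have a2 := h2' _ hp2
    have a3 := bar_R n hn _ hp2
    rw [ps_LR n hn _ hp] at a3
    have := dvd_add (dvd_sub a1 a2) a3
    refine dvdeq this ?_
    rw [pos_append, pos_append, ptr_append]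
    simp only [pos, ptr, dS]
    have h' : ptr w1 = τ + 1 := by linarith
    rw [h']; ring

/-- distance to the nearest multiple of `M` -/
def DD (M : ℕ) (x : ℤ) : ℤ := min (x % M) (M - x % M)

theorem DD_congr (M : ℕ) (x y : ℤ) (h : (M : ℤ) ∣ x - y) : DD M x = DD M y := by
  have : x % M = y % M := (Int.modEq_iff_dvd.2 h).symm
  unfold DD
  rw [this]

theorem DD_le_abs (M : ℕ) (hM : 0 < M) (x : ℤ) : DD M x ≤ |x| := by
  have hM' : (0 : ℤ) < M := by omega
  have h0 := Int.emod_nonneg x hM'.ne'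
  have h1 := Int.emod_lt_of_pos x hM'
  have h2 := Int.emod_add_mul_ediv x M
  unfold DD
  rcases le_or_gt 0 (x / M) with h | h
  · refine le_trans (min_le_left _ _) (le_trans ?_ (le_abs_self x))
    nlinarith
  · refine le_trans (min_le_right _ _) (le_trans ?_ (neg_le_abs x))
    nlinarith

theorem DD_le (M : ℕ) (hM : 0 < M) (x y : ℤ) (h : (M : ℤ) ∣ y - x) : DD M x ≤ |y| := by
  rw [← DD_congr M y x h]
  exact DD_le_abs M hM y

theorem DD_small (M j : ℕ) (hj : j < M) : DD M j = min (j : ℤ) (M - j) := by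
  unfold DD
  rw [Int.emod_eq_of_lt (by omega) (by omega)]

theorem qsum (M : ℕ) : 4 * ∑ j ∈ Finset.range M, min (j : ℤ) ((M : ℤ) - j) = M * M - (M % 2 : ℕ) := by
  induction M using Nat.twoStepInduction with
  | zero => simp
  | one => simp
  | more M ih _ =>
    rw [Finset.sum_range_succ']
    have e : ∑ k ∈ Finset.range (M + 1), min (((k + 1 : ℕ) : ℤ)) (((M + 2 : ℕ) : ℤ) - ((k + 1 : ℕ) : ℤ))
        = ∑ k ∈ Finset.range (M + 1), (1 + min (k : ℤ) ((M : ℤ) - k)) := by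
      refine Finset.sum_congr rfl (fun k _ => ?_)
      push_cast
      omega
    rw [e, Finset.sum_add_distrib, Finset.sum_range_succ (fun k : ℕ => min (k : ℤ) ((M : ℤ) - k))]
    simp only [Finset.sum_const, Finset.card_range, Nat.add_mod_right]
    rw [mul_add, mul_add, mul_add, ih]
    have : min (0 : ℤ) (M + 2) = 0 := by omega
    simp
    push_cast
    rw [this]
    ring

theorem sum_shift (h : ℤ → ℤ) (M : ℕ) (d x : ℤ) (hp : ∀ y, h (y + d * M) = h y) :
    ∑ j ∈ Finset.range M, h (x + d + d * j) = ∑ j ∈ Finset.range M, h (x + d * j) := by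
  have h1 := Finset.sum_range_succ (fun j : ℕ => h (x + d * j)) M
  have h2 := Finset.sum_range_succ' (fun j : ℕ => h (x + d * j)) M
  simp only [hp] at h1
  have e : ∑ j ∈ Finset.range M, h (x + d + d * j) =
      ∑ k ∈ Finset.range M, h (x + d * ((k + 1 : ℕ) : ℤ)) := by
    refine Finset.sum_congr rfl (fun k _ => ?_)
    congr 1
    push_cast; ring
  rw [e]
  simp at h2
  push_cast at h2 ⊢
  linarith

theorem sum_shift_nat (h : ℤ → ℤ) (M : ℕ) (d x : ℤ) (hp : ∀ y, h (y + d * M) = h y) (k : ℕ) :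
    ∑ j ∈ Finset.range M, h (x + d * k + d * j) = ∑ j ∈ Finset.range M, h (x + d * j) := by
  induction k with
  | zero => simp
  | succ k ih =>
    rw [← ih, ← sum_shift h M d (x + d * k) hp]
    refine Finset.sum_congr rfl (fun j _ => ?_)
    congr 1
    push_cast; ring

theorem sum_shift_int (h : ℤ → ℤ) (M : ℕ) (d x : ℤ) (hp : ∀ y, h (y + d * M) = h y) (k : ℤ) :
    ∑ j ∈ Finset.range M, h (x + d * k + d * j) = ∑ j ∈ Finset.range M, h (x + d * j) := by
  rcases Int.eq_nat_or_neg k with ⟨m, rfl | rfl⟩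
  · exact sum_shift_nat h M d x hp m
  · rw [← sum_shift_nat h M d (x + d * -(m : ℤ)) hp m]
    refine Finset.sum_congr rfl (fun j _ => ?_)
    congr 1
    ring

theorem DD_per (M : ℕ) (d y : ℤ) : DD M (y + d * M) = DD M y :=
  DD_congr M _ _ ⟨d, by ring⟩

theorem sum_DD (M : ℕ) (x : ℤ) : 4 * ∑ j ∈ Finset.range M, DD M (x + j) = M * M - (M % 2 : ℕ) := by
  have h := sum_shift_int (DD M) M 1 0 (fun y => DD_per M 1 y) x
  simp only [zero_add, one_mul] at h
  rw [h, ← qsum]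
  congr 1
  refine Finset.sum_congr rfl (fun j hj => ?_)
  exact DD_small M j (Finset.mem_range.1 hj)

/-- the sum over even offsets -/
def TT (M : ℕ) (C : ℤ) : ℤ := ∑ j ∈ Finset.range M, DD M (C + 2 * j)

theorem TT_even (M : ℕ) (C k : ℤ) : TT M (C + 2 * k) = TT M C :=
  sum_shift_int (DD M) M 2 C (fun y => DD_per M 2 y) k

theorem sum_two (h : ℤ → ℤ) (C : ℤ) (K : ℕ) :
    ∑ j ∈ Finset.range K, h (C + 2 * j) + ∑ j ∈ Finset.range K, h (C + 1 + 2 * j) =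
      ∑ p ∈ Finset.range (2 * K), h (C + p) := by
  induction K with
  | zero => simp
  | succ K ih =>
    rw [show 2 * (K + 1) = 2 * K + 1 + 1 by ring, Finset.sum_range_succ, Finset.sum_range_succ,
      Finset.sum_range_succ, Finset.sum_range_succ, ← ih]
    push_cast
    rw [show C + 1 + 2 * (K : ℤ) = C + (2 * K + 1) by ring]
    ring

theorem sum_DD2 (M : ℕ) (x : ℤ) :
    2 * ∑ j ∈ Finset.range (2 * M), DD M (x + j) = M * M - (M % 2 : ℕ) := by
  rw [two_mul M, Finset.sum_range_add]
  have h1 := sum_DD M x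
  have h2 := sum_DD M (x + M)
  simp only [add_assoc] at h2
  simp only [Nat.cast_add]
  linarith

theorem TT_add (M : ℕ) (C : ℤ) : 2 * (TT M C + TT M (C + 1)) = M * M - (M % 2 : ℕ) := by
  unfold TT
  rw [sum_two (DD M) C M, sum_DD2]

theorem TT_odd (f : ℕ) (hf : 1 ≤ f) (C : ℤ) : TT (2 * f - 1) C = f * (f - 1) := by
  have h1 := TT_add (2 * f - 1) C
  have h2 : TT (2 * f - 1) (C + 1) = TT (2 * f - 1) C := by
    rw [← TT_even (2 * f - 1) (C + 1) (f - 1)]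
    unfold TT
    refine Finset.sum_congr rfl (fun j _ => ?_)
    rw [← DD_per (2 * f - 1) 1 (C + 2 * j)]
    congr 1
    rw [Nat.cast_sub (by omega)]
    push_cast; ring
  have h3 : (2 * f - 1) % 2 = 1 := by omega
  rw [h2, h3, Nat.cast_sub (by omega)] at h1
  push_cast at h1
  nlinarith

theorem DD_double (f : ℕ) (x : ℤ) : DD (2 * f) (2 * x) = 2 * DD f x := by
  unfold DD
  push_cast
  rw [Int.mul_emod_mul_of_pos _ _ (by norm_num : (0 : ℤ) < 2)]
  omega

theorem TT_zero (f : ℕ) : TT (2 * f) 0 = f * f - (f % 2 : ℕ) := by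
  have h := sum_DD2 f 0
  rw [← h]
  unfold TT
  rw [Finset.mul_sum]
  refine Finset.sum_congr rfl (fun j _ => ?_)
  rw [zero_add, zero_add, DD_double]

theorem TT_one (f : ℕ) : TT (2 * f) 1 = f * f + (f % 2 : ℕ) := by
  have h := TT_add (2 * f) 0
  rw [TT_zero, zero_add] at h
  simp at h
  push_cast at h ⊢
  linarith

theorem arith_even (f : ℕ) (hf : 1 ≤ f) (C x : ℤ) (hD : (f : ℤ) - 1 ≤ x) :
    (f : ℤ) * (f - 1) + f ≤ TT (2 * f - 1) C + x + 1 := by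
  rw [TT_odd f hf]; linarith

theorem arith_odd (f : ℕ) (hf : 1 ≤ f) (C : ℤ) (hD : (f : ℤ) - 1 ≤ DD (2 * f) (C + 1)) :
    (f : ℤ) * f + f ≤ TT (2 * f) C + DD (2 * f) (C + 1) + 1 := by
  rcases Int.even_or_odd' C with ⟨k, rfl | rfl⟩
  · have h := TT_even (2 * f) 0 k
    rw [zero_add, TT_zero] at h
    rw [h]
    have hp : DD (2 * f) (2 * k + 1) % 2 = 1 := by
      unfold DD
      have : (2 * k + 1) % ((2 * f : ℕ) : ℤ) % 2 = 1 := by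
        rw [Int.emod_emod_of_dvd _ (by push_cast; exact dvd_mul_right _ _)]
        omega
      push_cast at this ⊢
      omega
    push_cast
    have : (f : ℤ) + (f % 2 : ℤ) ≤ DD (2 * f) (2 * k + 1) + 1 := by omega
    linarith
  · have h := TT_even (2 * f) 1 k
    rw [add_comm, TT_one] at h
    rw [h]
    have : (0 : ℤ) ≤ (f % 2 : ℕ) := by omega
    linarith

theorem choose_tau (f M : ℕ) (hf : 2 ≤ f) (hM : M = 2 * f - 1 ∨ M = 2 * f) (x0 : ℤ) :
    ∃ k : ℕ, k < f ∧ (f : ℤ) - 1 ≤ DD M (x0 + 2 * k) := by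
  have hM' : (0 : ℤ) < M := by omega
  have h0 := Int.emod_nonneg (x0 - (f - 1)) hM'.ne'
  have h1 := Int.emod_lt_of_pos (x0 - (f - 1)) hM'
  have h2 := Int.emod_add_mul_ediv (x0 - (f - 1)) M
  set r := (x0 - (f - 1)) % (M : ℤ) with hr
  set t := (x0 - (f - 1)) / (M : ℤ) with ht
  have fin : ∀ y e : ℤ, (e = 0 ∨ e = 1) → (M : ℤ) ∣ y - (f - 1 + e) → (f : ℤ) - 1 ≤ DD M y := by
    intro y e he hy
    rw [DD_congr M y _ hy]
    unfold DD
    rw [Int.emod_eq_of_lt (by omega) (by omega)]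
    omega
  by_cases hr2 : r < 2
  · refine ⟨0, by omega, fin _ r (by omega) ⟨t, ?_⟩⟩
    push_cast; linarith
  · refine ⟨((M - r + 1) / 2).toNat, by omega, ?_⟩
    have hk : (((M - r + 1) / 2).toNat : ℤ) = (M - r + 1) / 2 := Int.toNat_of_nonneg (by omega)
    rw [hk]
    refine fin _ (r + 2 * ((M - r + 1) / 2) - M) (by omega) ⟨t + 1, ?_⟩
    linarith

theorem gg_sum (n : ℕ) (hn : 2 ≤ n) (C : ℤ) :
    ∑ p ∈ Finset.range n, DD (n - 1) (C + gg p) = TT (n - 1) (C + 2) + DD (n - 1) (C + 3) := by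
  obtain ⟨m, rfl⟩ : ∃ m, n = m + 2 := ⟨n - 2, by omega⟩
  rw [Finset.sum_range_succ', Finset.sum_range_succ']
  unfold TT
  rw [show m + 2 - 1 = m + 1 by omega, Finset.sum_range_succ']
  have e : ∑ k ∈ Finset.range m, DD (m + 1) (C + gg (k + 1 + 1)) =
      ∑ k ∈ Finset.range m, DD (m + 1) (C + 2 + 2 * ((k + 1 : ℕ) : ℤ)) := by
    refine Finset.sum_congr rfl (fun k _ => ?_)
    congr 1
    simp [gg, bar]; ring
  rw [e]
  simp [gg, bar]
  ring

/-- correction term -/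
def cc (i z : ℕ) : ℤ := if i ≤ z ∨ z = 0 ∨ z = i - 1 then 1 else 0

theorem cc_sum (n i : ℕ) (hi : 2 ≤ i) (hin : i ≤ n) :
    ∑ z ∈ Finset.range n, cc i z = n - i + 2 := by
  obtain ⟨k, rfl⟩ : ∃ k, n = i + k := ⟨n - i, by omega⟩
  rw [Finset.sum_range_add]
  obtain ⟨j, rfl⟩ : ∃ j, i = j + 2 := ⟨i - 2, by omega⟩
  have e1 : ∑ x ∈ Finset.range k, cc (j + 2) (j + 2 + x) = k := by
    rw [Finset.sum_congr rfl (fun x _ => show cc (j + 2) (j + 2 + x) = 1 by simp [cc])]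
    simp
  have e2 : ∑ x ∈ Finset.range j, cc (j + 2) (x + 1) = 0 := by
    refine Finset.sum_eq_zero (fun x hx => ?_)
    rw [Finset.mem_range] at hx
    unfold cc
    rw [if_neg (by omega)]
  rw [e1, Finset.sum_range_succ, Finset.sum_range_succ', e2]
  simp [cc]
  ring

theorem cc_bar (n i z : ℕ) (hi : 2 ≤ i) (hin : i ≤ n) (hz : z < n) :
    ((n : ℤ) - 1) ∣ bar z + bar (fin_pos n i z) - (i - 1 + cc i z) := by
  unfold fin_pos cc bar
  by_cases h : z < i
  · refine ⟨0, ?_⟩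
    rw [if_pos h]
    split_ifs <;> omega
  · refine ⟨1, ?_⟩
    rw [if_neg h]
    split_ifs <;> omega

theorem moves_bound (n : ℕ) (hn : 5 ≤ n) (i : ℕ) (hi : 2 ≤ i) (hin : i ≤ n) (w : List Stp)
    (hw : ∀ z, z < n → pos n w z = fin_pos n i z) :
    ∃ C : ℤ, ((n / 2 : ℕ) : ℤ) - 1 ≤ DD (n - 1) (C + 1) ∧
      TT (n - 1) C + DD (n - 1) (C + 1) + 1 ≤ mv w + (n - i + 2) := by
  obtain ⟨α, ⟨u, hu, hu'⟩, v, hv, hv'⟩ := range_bound n hn i hin w hw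
  obtain ⟨k, hk, hD⟩ := choose_tau (n / 2) (n - 1) (by omega) (by omega)
    (2 * α - ptr w - i + 4)
  obtain ⟨v', Δ, h1, h2⟩ := cut n (by omega) w (α + k) (traverse w (α + k) 0 ⟨u, hu, by omega⟩
    ⟨v, hv, by omega⟩)
  set C : ℤ := 2 * (α + k) - ptr w - i + 1 with hC
  have e3 : C + 2 + 1 = 2 * α - ptr w - i + 4 + 2 * k := by rw [hC]; ring
  refine ⟨C + 2, by rw [e3]; exact hD, ?_⟩
  have hz : ∀ z ∈ Finset.range n, DD (n - 1) (C + gg (pos n v' z)) ≤ |Δ z| + cc i z := by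
    intro z hz
    rw [Finset.mem_range] at hz
    have a1 := h2 z hz
    rw [hw z hz] at a1
    have a2 := cc_bar n i z hi hin hz
    have hcc : |cc i z| = cc i z := by unfold cc; split_ifs <;> simp
    refine le_trans ?_ (le_trans (abs_add_le (Δ z) (cc i z)) (by rw [hcc]))
    refine DD_le (n - 1) (by omega) _ _ ?_
    rw [Nat.cast_sub (by omega)]
    refine dvdeq (dvd_sub a1 a2) ?_
    rw [hC]; ring
  have hs := Finset.sum_le_sum hz
  rw [sum_pos' n (by omega) v' (fun p => DD (n - 1) (C + gg p)), gg_sum n (by omega),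
    Finset.sum_add_distrib, cc_sum n i hi hin] at hs
  rw [show C + 2 + 1 = C + 3 by ring]
  linarith

theorem lower_four (w : List Stp) (hw : ∀ z, z < 4 → pos 4 w z = fin_pos 4 4 z) : 4 ≤ w.length := by
  by_contra hcon
  have h0 := hw 0 (by omega)
  have h1 := hw 1 (by omega)
  have h2 := hw 2 (by omega)
  rcases w with _ | ⟨a, _ | ⟨b, _ | ⟨c, _ | ⟨d, w⟩⟩⟩⟩
  · simp [pos, fin_pos] at h0
  · cases a <;> simp [pos, ps, fin_pos] at h0 h1 h2
  · cases a <;> cases b <;> simp [pos, ps, fin_pos] at h0 h1 h2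
  · cases a <;> cases b <;> cases c <;> simp [pos, ps, fin_pos] at h0 h1 h2
  · simp at hcon

theorem lower_comb (n : ℕ) (hn : 4 ≤ n) (i : ℕ) (hi1 : (n + 1) / 2 + 2 ≤ i) (hi2 : i ≤ n)
    (w : List Stp) (hw : ∀ z, z < n → pos n w z = fin_pos n i z) :
    (((n + 1) / 2 * ((n + 1) / 2 - 1) - 1) + (n / 2 * (n / 2 - 1) - 1) + (i - (n + 1) / 2))
      ≤ w.length := by
  by_cases h4 : n = 4
  · subst h4
    obtain rfl : i = 4 := by omega
    simpa using lower_four w hw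
  · obtain ⟨C, hC1, hC2⟩ := moves_bound n (by omega) i (by omega) hi2 w hw
    have hs := swaps_bound n (by omega) i hi2 w hw
    rw [len_eq]
    obtain ⟨f, hf⟩ : ∃ f, n = 2 * f ∨ n = 2 * f + 1 := ⟨n / 2, by omega⟩
    rcases hf with rfl | rfl
    · have hf2 : 2 ≤ f := by omega
      rw [show 2 * f / 2 = f by omega] at *
      rw [show (2 * f + 1) / 2 = f by omega] at *
      have := arith_even f (by omega) C _ hC1
      obtain ⟨g, rfl⟩ : ∃ g, f = g + 1 := ⟨f - 1, by omega⟩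
      rw [show g + 1 - 1 = g by omega]
      have e1 : 2 * (g + 1) * (2 * (g + 1) - 1) / 2 = (g + 1) * g + (g + 1) * (g + 1) := by
        rw [show 2 * (g + 1) - 1 = 2 * g + 1 by omega, mul_assoc, Nat.mul_div_cancel_left _ (by norm_num)]
        ring
      have e2 : 2 * (g + 1) * (2 * (g + 1)) / 4 = (g + 1) * (g + 1) := by
        rw [show 2 * (g + 1) * (2 * (g + 1)) = 4 * ((g + 1) * (g + 1)) by ring,
          Nat.mul_div_cancel_left _ (by norm_num)]
      rw [e1, e2] at hs
      have hs' : (g + 1) * g ≤ nX w := by omega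
      have hm : (((g + 1) * g : ℕ) : ℤ) + (g + 1) ≤ mv w + ((2 * (g + 1) : ℕ) - i + 2) := by
        push_cast at this hC2 ⊢
        linarith
      have hy : 1 ≤ (g + 1) * g := Nat.mul_pos (by omega) (by omega)
      clear this hC1 hC2 e1 e2 hs
      generalize (g + 1) * g = y at hy hs' hm ⊢
      omega
    · have hf2 : 2 ≤ f := by omega
      rw [show (2 * f + 1) / 2 = f by omega] at *
      rw [show (2 * f + 1 + 1) / 2 = f + 1 by omega] at *
      rw [show 2 * f + 1 - 1 = 2 * f by omega] at *
      have := arith_odd f (by omega) C hC1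
      obtain ⟨g, rfl⟩ : ∃ g, f = g + 1 := ⟨f - 1, by omega⟩
      rw [show g + 1 - 1 = g by omega, show g + 1 + 1 - 1 = g + 1 by omega]
      have e1 : (2 * (g + 1) + 1) * (2 * (g + 1)) / 2 = (g + 1) * (g + 1) + (g + 1) * (g + 2) := by
        rw [show (2 * (g + 1) + 1) * (2 * (g + 1)) = 2 * ((g + 1) * (g + 1) + (g + 1) * (g + 2)) by ring,
          Nat.mul_div_cancel_left _ (by norm_num)]
      have e2 : (2 * (g + 1) + 1) * (2 * (g + 1) + 1) / 4 = (g + 1) * (g + 2) := by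
        rw [show (2 * (g + 1) + 1) * (2 * (g + 1) + 1) = 1 + 4 * ((g + 1) * (g + 2)) by ring,
          Nat.add_mul_div_left _ _ (by norm_num)]
        simp
      rw [e1, e2] at hs
      have hs' : (g + 1) * (g + 1) ≤ nX w := by omega
      have hm : (((g + 1) * (g + 1) : ℕ) : ℤ) + (g + 1) ≤ mv w + ((2 * (g + 1) + 1 : ℕ) - i + 2) := by
        push_cast at this hC2 ⊢
        linarith
      have e3 : (g + 1 + 1) * (g + 1) = (g + 1) * (g + 1) + (g + 1) := by ring
      have e4 : (g + 1) * (g + 1) = (g + 1) * g + (g + 1) := by ring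
      rw [e3]
      have hy : 1 ≤ (g + 1) * g := Nat.mul_pos (by omega) (by omega)
      clear this hC1 hC2 e1 e2 e3 hs
      generalize (g + 1) * (g + 1) = y at e4 hs' hm ⊢
      generalize (g + 1) * g = y' at e4 hy ⊢
      omega

theorem lower (n : ℕ) (hn : 4 ≤ n) (hn2 : 2 ≤ n) (i : ℕ) (hi1 : (n + 1) / 2 + 2 ≤ i) (hi2 : i ≤ n)
    (l : List (Equiv.Perm (Fin n))) (hl : ∀ x ∈ l, x ∈ gens n hn2)
    (hp : l.prod = ((Fin.revPerm : Equiv.Perm (Fin n)) * (finRotate n) ^ (n - i))⁻¹) :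
    (((n + 1) / 2 * ((n + 1) / 2 - 1) - 1) + (n / 2 * (n / 2 - 1) - 1) + (i - (n + 1) / 2))
      ≤ l.length := by
  obtain ⟨w, rfl⟩ := exists_stp n hn2 l hl
  rw [List.length_map]
  refine lower_comb n hn i hi1 hi2 w ?_
  intro z hz
  have h := pos_eq n hn2 w ⟨z, hz⟩
  rw [hp, inv_inv] at h
  rw [← h, Equiv.Perm.mul_apply, Fin.revPerm_apply, Fin.val_rev, rot_pow_val n hn2]
  simp only [fin_pos]
  split_ifs with h
  · rw [Nat.mod_eq_of_lt (by omega)]; omega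
  · rw [Nat.mod_eq_sub_mod (by omega), Nat.mod_eq_of_lt (by omega)]; omega

theorem stmt13 (n : ℕ) (hn : 4 ≤ n) (i : ℕ) (hi1 : (n + 1) / 2 + 2 ≤ i) (hi2 : i ≤ n) :
    IsMinWordLen n (by omega)
      (((Fin.revPerm : Equiv.Perm (Fin n)) * (finRotate n) ^ (n - i))⁻¹)
      (((n + 1) / 2 * ((n + 1) / 2 - 1) - 1) + (n / 2 * (n / 2 - 1) - 1) + (i - (n + 1) / 2)) := by
  exact ⟨upper n hn (by omega) i hi1 hi2, fun l hl hp => lower n hn (by omega) i hi1 hi2 l hl hp⟩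
end

section
/- Let n ≥ 3, 2 ≤ j ≤ ⌈n/2⌉, δ = (1 2), r = (1 2 … n) in S_n, and dist the word metric with respect to {δ, r, r^{-1}}. Let π ∈ S_n and let ξ reverse the first j entries of π's one-line notation. Then dist(π r^{⌊j/2⌋ - 1}, ξ) = j(j-1) - 1 and dist(π r^{⌈j/2⌉ - 1}, ξ r^{j-2}) = j(j-1) - 1. -/
namespace Stmt16Aux

open Finset
open scoped Fin.CommRing

/-! ### The potential -/

/-- crossing count of the ordered pair `(i,k)` -/
def tt {n : ℕ} (g : Equiv.Perm (Fin n)) (c : Fin n → ℤ) (i k : Fin n) : ℤ :=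
  |c k - c i - (if g k < g i then 1 else 0) + (if k < i then 1 else 0)|

/-- twice the affine inversion number -/
def Psi {n : ℕ} (g : Equiv.Perm (Fin n)) (c : Fin n → ℤ) : ℤ :=
  ∑ i, ∑ k, tt g c i k

theorem rot_val {m : ℕ} (q : Fin (m + 1)) :
    ((finRotate (m + 1) q : Fin (m + 1)) : ℕ) = if (q : ℕ) = m then 0 else (q : ℕ) + 1 := by
  rw [coe_finRotate]
  simp [Fin.ext_iff]

theorem Psi_rot {m : ℕ} (g : Equiv.Perm (Fin (m + 1))) (c : Fin (m + 1) → ℤ) :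
    Psi (finRotate (m + 1) * g) (fun p => c p + if ((g p : Fin (m+1)) : ℕ) = m then 1 else 0)
      = Psi g c := by
  unfold Psi
  refine sum_congr rfl fun i _ => sum_congr rfl fun k _ => ?_
  by_cases hik : i = k
  · subst hik; simp [tt]
  have h : ((g i : Fin (m+1)) : ℕ) ≠ (g k : Fin (m+1)) := by
    intro h; exact hik (g.injective (Fin.ext h))
  unfold tt
  congr 1
  simp only [Equiv.Perm.mul_apply, Fin.lt_def, rot_val]
  have h1 := (g i).isLt
  have h2 := (g k).isLt
  split_ifs <;> omega

theorem Psi_rot_inv {m : ℕ} (g : Equiv.Perm (Fin (m + 1))) (c : Fin (m + 1) → ℤ) :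
    ∃ c', Psi ((finRotate (m + 1))⁻¹ * g) c' = Psi g c := by
  refine ⟨fun p => c p - if ((((finRotate (m + 1))⁻¹ * g) p : Fin (m+1)) : ℕ) = m then 1 else 0, ?_⟩
  rw [← Psi_rot]
  congr 1
  · group
  · funext p; simp

theorem ind_sum {n : ℕ} (g : Equiv.Perm (Fin n)) (a b : Fin n) :
    ∑ i, ∑ k, (if g i = a ∧ g k = b then (1:ℤ) else 0) = 1 := by
  rw [Equiv.sum_comp g (fun x => ∑ k, (if x = a ∧ g k = b then (1:ℤ) else 0))]
  have : ∀ x, ∑ k, (if x = a ∧ g k = b then (1:ℤ) else 0)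
      = ∑ y, (if x = a ∧ y = b then (1:ℤ) else 0) := fun x =>
    Equiv.sum_comp g (fun y => (if x = a ∧ y = b then (1:ℤ) else 0))
  simp only [this]
  simp [ite_and]

theorem delta_val {n : ℕ} (hn : 2 ≤ n) (q : Fin n) :
    ((delta n hn q : Fin n) : ℕ) = if (q : ℕ) = 0 then 1 else if (q : ℕ) = 1 then 0 else (q : ℕ) := by
  unfold delta
  rw [Equiv.swap_apply_def]
  simp only [Fin.ext_iff]
  split_ifs <;> rfl

theorem Psi_delta {n : ℕ} (hn : 2 ≤ n) (g : Equiv.Perm (Fin n)) (c : Fin n → ℤ) :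
    Psi (delta n hn * g) c ≤ Psi g c + 2 := by
  have e1 := ind_sum g ⟨0, by omega⟩ ⟨1, by omega⟩
  have e2 := ind_sum g ⟨1, by omega⟩ ⟨0, by omega⟩
  have : Psi g c + 2 = ∑ i, ∑ k, (tt g c i k
      + ((if g i = ⟨0, by omega⟩ ∧ g k = ⟨1, by omega⟩ then (1:ℤ) else 0)
      + (if g i = ⟨1, by omega⟩ ∧ g k = ⟨0, by omega⟩ then (1:ℤ) else 0))) := by
    simp only [sum_add_distrib]
    rw [e1, e2]; unfold Psi; ring
  rw [this]
  unfold Psi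
  refine sum_le_sum fun i _ => sum_le_sum fun k _ => ?_
  by_cases hik : i = k
  · subst hik
    have : tt (delta n hn * g) c i i = tt g c i i := by simp [tt]
    rw [this]
    split_ifs <;> omega
  have h : ((g i : Fin n) : ℕ) ≠ (g k : Fin n) := by
    intro h; exact hik (g.injective (Fin.ext h))
  unfold tt
  simp only [Equiv.Perm.mul_apply, Fin.lt_def, delta_val, Fin.ext_iff]
  generalize ((g i : Fin n) : ℕ) = x at *
  generalize ((g k : Fin n) : ℕ) = y at *
  clear e1 e2 this
  split_ifs <;> simp only [abs] <;> omega

theorem delta_sq {n : ℕ} (hn : 2 ≤ n) : delta n hn * delta n hn = 1 := by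
  simp [delta]

theorem word_bound {m : ℕ} (hn : 2 ≤ m + 1) (l : List (Equiv.Perm (Fin (m+1))))
    (hl : ∀ x ∈ l, x ∈ gens (m+1) hn) :
    (∃ c, Psi l.prod c ≤ l.length) ∨ (∃ c, Psi (delta (m+1) hn * l.prod) c + 1 ≤ l.length) := by
  induction l with
  | nil =>
    left
    refine ⟨fun _ => 0, ?_⟩
    have : Psi (1 : Equiv.Perm (Fin (m+1))) (fun _ => 0) = 0 := by
      unfold Psi tt
      refine sum_eq_zero fun i _ => sum_eq_zero fun k _ => ?_
      by_cases h : k < i <;> simp [h]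
    simp [this]
  | cons s l ih =>
    have ih := ih (fun x hx => hl x (List.mem_cons_of_mem _ hx))
    have hs : s ∈ gens (m+1) hn := hl s (List.mem_cons_self)
    have key : ∃ c, Psi l.prod c ≤ l.length + 1 := by
      rcases ih with ⟨c, h⟩ | ⟨c, h⟩
      · exact ⟨c, by omega⟩
      · refine ⟨c, ?_⟩
        have := Psi_delta hn (delta (m+1) hn * l.prod) c
        rw [← mul_assoc, delta_sq, one_mul] at this
        omega
    simp only [gens, Set.mem_insert_iff, Set.mem_singleton_iff] at hs
    rcases hs with rfl | rfl | rfl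
    · rcases ih with ⟨c, h⟩ | ⟨c, h⟩
      · right
        refine ⟨c, ?_⟩
        rw [List.prod_cons, ← mul_assoc, delta_sq, one_mul, List.length_cons]
        push_cast; omega
      · left
        refine ⟨c, ?_⟩
        rw [List.prod_cons, List.length_cons]
        push_cast; omega
    · obtain ⟨c, h⟩ := key
      left
      have h' := Psi_rot l.prod c
      refine ⟨_, le_trans (le_of_eq h') ?_⟩
      rw [List.length_cons]
      push_cast; omega
    · obtain ⟨c, h⟩ := key
      obtain ⟨c', h'⟩ := Psi_rot_inv l.prod c
      left
      refine ⟨c', ?_⟩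
      rw [List.prod_cons, h', List.length_cons]
      push_cast; omega

theorem word_bound' {m : ℕ} (hn : 2 ≤ m + 1) (l : List (Equiv.Perm (Fin (m+1))))
    (hl : ∀ x ∈ l, x ∈ gens (m+1) hn) :
    ∃ c, Psi l.prod c ≤ l.length + 1 := by
  rcases word_bound hn l hl with ⟨c, h⟩ | ⟨c, h⟩
  · exact ⟨c, by omega⟩
  · refine ⟨c, ?_⟩
    have := Psi_delta hn (delta (m+1) hn * l.prod) c
    rw [← mul_assoc, delta_sq, one_mul] at this
    omega

theorem Psi_rot_pow {m : ℕ} (a : ℕ) (g : Equiv.Perm (Fin (m + 1))) (c : Fin (m + 1) → ℤ) :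
    ∃ c', Psi ((finRotate (m + 1)) ^ a * g) c' = Psi g c := by
  induction a with
  | zero => exact ⟨c, by simp⟩
  | succ a ih =>
    obtain ⟨c', h⟩ := ih
    have hrot := Psi_rot (finRotate (m + 1) ^ a * g) c'
    rw [h, ← mul_assoc, ← pow_succ'] at hrot
    exact ⟨_, hrot⟩

/-! ### The reversal -/

def revFun (n j : ℕ) (p : Fin n) : Fin n :=
  if (p : ℕ) < j then ⟨j - 1 - p - (j - n), by have := p.isLt; omega⟩ else p

theorem revFun_val {n j : ℕ} (hj : j ≤ n) (p : Fin n) :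
    (revFun n j p : ℕ) = if (p : ℕ) < j then j - 1 - p else p := by
  unfold revFun
  split_ifs
  · simp; omega
  · rfl

theorem revFun_inv {n j : ℕ} (hj : j ≤ n) : Function.Involutive (revFun n j) := by
  intro p
  apply Fin.ext
  rw [revFun_val hj, revFun_val hj]
  split_ifs <;> omega

def rev (n j : ℕ) (hj : j ≤ n) : Equiv.Perm (Fin n) := (revFun_inv hj).toPerm

theorem rev_val {n j : ℕ} (hj : j ≤ n) (p : Fin n) :
    (rev n j hj p : ℕ) = if (p : ℕ) < j then j - 1 - p else p := revFun_val hj p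

theorem tt_nonneg {n : ℕ} (g : Equiv.Perm (Fin n)) (c : Fin n → ℤ) (i k : Fin n) :
    0 ≤ tt g c i k := abs_nonneg _

theorem card_range {n a b : ℕ} (hb : b ≤ n) :
    (univ.filter (fun p : Fin n => a ≤ (p : ℕ) ∧ (p : ℕ) < b)).card = b - a := by
  rw [← Nat.card_Ico]
  refine card_bij (fun p _ => (p : ℕ)) ?_ ?_ ?_
  · intro p hp; simpa using hp
  · intro p _ q _ h; exact Fin.ext h
  · intro q hq
    rw [mem_Ico] at hq
    exact ⟨⟨q, by omega⟩, by simpa using hq, rfl⟩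

theorem Psi_rev {n j : ℕ} (hj1 : 2 ≤ j) (hj2 : 2 * j ≤ n + 1) (hj : j ≤ n) (c : Fin n → ℤ) :
    (j : ℤ) * (j - 1) ≤ Psi (rev n j hj) c := by
  set J := univ.filter (fun p : Fin n => 0 ≤ (p : ℕ) ∧ (p : ℕ) < j) with hJ
  set F := univ.filter (fun p : Fin n => j ≤ (p : ℕ) ∧ (p : ℕ) < 2 * j - 1) with hF
  have cJ : (J.card : ℤ) = j := by rw [hJ, card_range hj]; simp
  have cF : (F.card : ℤ) = j - 1 := by rw [hF, card_range (by omega)]; omega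
  have mJ : ∀ i ∈ J, (i : ℕ) < j := fun i hi => by simpa [hJ] using hi
  have mF : ∀ i ∈ F, j ≤ (i : ℕ) := fun i hi => by
    have : j ≤ (i : ℕ) ∧ (i : ℕ) < 2 * j - 1 := by simpa [hF] using hi
    exact this.1
  have hdis : Disjoint J F := by
    rw [disjoint_left]; intro p h1 h2
    have := mJ p h1; have := mF p h2; omega
  set t := tt (rev n j hj) c with ht
  set S : Fin n → ℤ := fun x => ∑ i ∈ J, |c i - c x| with hS
  set R : ℤ := ∑ i ∈ J, ∑ k ∈ J, t i k with hR
  have tJF : ∀ i ∈ J, ∀ x ∈ F, t i x = |c i - c x| := by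
    intro i hi x hx
    have := mJ i hi; have := mF x hx
    rw [ht]; unfold tt
    simp only [Fin.lt_def, rev_val]
    rw [abs_sub_comm (c i)]
    congr 1
    split_ifs <;> omega
  have tFJ : ∀ i ∈ J, ∀ x ∈ F, t x i = |c i - c x| := by
    intro i hi x hx
    have := mJ i hi; have := mF x hx
    rw [ht]; unfold tt
    simp only [Fin.lt_def, rev_val]
    congr 1
    split_ifs <;> omega
  have lower : R + 2 * ∑ x ∈ F, S x ≤ Psi (rev n j hj) c := by
    have h1 : ∑ i ∈ J ∪ F, ∑ k ∈ J ∪ F, t i k ≤ Psi (rev n j hj) c := by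
      unfold Psi
      refine le_trans (sum_le_sum fun i _ => ?_)
        (sum_le_sum_of_subset_of_nonneg (subset_univ _) fun i _ _ => ?_)
      · exact sum_le_sum_of_subset_of_nonneg (subset_univ _) fun k _ _ => tt_nonneg _ _ _ _
      · exact sum_nonneg fun k _ => tt_nonneg _ _ _ _
    simp only [sum_union hdis, sum_add_distrib] at h1
    have h2 : ∑ i ∈ J, ∑ k ∈ F, t i k = ∑ x ∈ F, S x := by
      rw [sum_comm]
      exact sum_congr rfl fun x hx => sum_congr rfl fun i hi => tJF i hi x hx
    have h3 : ∑ i ∈ F, ∑ k ∈ J, t i k = ∑ x ∈ F, S x :=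
      sum_congr rfl fun x hx => sum_congr rfl fun i hi => tFJ i hi x hx
    have h4 : 0 ≤ ∑ i ∈ F, ∑ k ∈ F, t i k :=
      sum_nonneg fun i _ => sum_nonneg fun k _ => tt_nonneg _ _ _ _
    linarith
  have each : ∀ x, (j : ℤ) * (j - 1) ≤ R + 2 * (j - 1) * S x := by
    intro x
    have h0 : ∑ i ∈ J, ∑ k ∈ J, (1 - if i = k then (1:ℤ) else 0)
        ≤ ∑ i ∈ J, ∑ k ∈ J, (t i k + |c i - c x| + |c k - c x|
          - if i = k then 2 * |c i - c x| else 0) := by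
      refine sum_le_sum fun i hi => sum_le_sum fun k hk => ?_
      by_cases hik : i = k
      · subst hik
        have : 0 ≤ t i i := tt_nonneg _ _ _ _
        simp only [if_true]; linarith
      · have h : (i : ℕ) ≠ k := fun h => hik (Fin.ext h)
        have := mJ i hi; have := mJ k hk
        simp only [hik, if_false, ht]
        unfold tt
        simp only [Fin.lt_def, rev_val]
        simp only [abs]
        split_ifs <;> omega
    simp only [sum_sub_distrib, sum_add_distrib, sum_ite_eq, sum_const, nsmul_eq_mul, cJ] at h0
    have e1 : ∑ i ∈ J, (if i ∈ J then (1:ℤ) else 0) = j := by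
      rw [sum_congr rfl (fun i hi => if_pos hi)]; simp [cJ]
    have e2 : ∑ i ∈ J, (if i ∈ J then 2 * |c i - c x| else 0) = 2 * S x := by
      rw [sum_congr rfl (fun i hi => if_pos hi), mul_sum]
    rw [e1, e2, ← mul_sum] at h0
    change _ ≤ R + j * S x + j * S x - 2 * S x at h0
    linarith
  have tot : ∑ x ∈ F, (j : ℤ) * (j - 1) ≤ ∑ x ∈ F, (R + 2 * (j - 1) * S x) :=
    sum_le_sum fun x _ => each x
  simp only [sum_add_distrib, sum_const, nsmul_eq_mul, cF, ← mul_sum] at tot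
  have hpos : (0 : ℤ) < j - 1 := by omega
  have : (j : ℤ) * (j - 1) ≤ R + 2 * ∑ x ∈ F, S x := by
    refine le_of_mul_le_mul_left ?_ hpos
    linarith
  linarith

/-- lower bound for the first distance -/
theorem lower1 {m j : ℕ} (hn : 2 ≤ m + 1) (hj1 : 2 ≤ j) (hj2 : 2 * j ≤ m + 1 + 1) (hj : j ≤ m + 1)
    (a : ℕ) (l : List (Equiv.Perm (Fin (m+1)))) (hl : ∀ x ∈ l, x ∈ gens (m+1) hn)
    (hp : l.prod = ((finRotate (m+1)) ^ a)⁻¹ * rev (m+1) j hj) :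
    j * (j - 1) - 1 ≤ l.length := by
  obtain ⟨c, h⟩ := word_bound' hn l hl
  obtain ⟨c', h'⟩ := Psi_rot_pow a l.prod c
  rw [hp, mul_inv_cancel_left, ← hp] at h'
  have := Psi_rev hj1 hj2 hj c'
  have e : ((j * (j - 1) : ℕ) : ℤ) = (j : ℤ) * (j - 1) := by
    push_cast [Nat.cast_sub (show 1 ≤ j by omega)]; ring
  omega

/-! ### Symmetry -/

/-- `i ↦ 1 - i` -/
def rho (m : ℕ) : Equiv.Perm (Fin (m+1)) := Equiv.subLeft 1

theorem rho_sq (m : ℕ) : rho m * rho m = 1 := by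
  ext i; simp [rho]

theorem rho_rot (m : ℕ) : rho m * finRotate (m+1) * rho m = (finRotate (m+1))⁻¹ := by
  rw [eq_inv_iff_mul_eq_one]
  apply Equiv.ext; intro i
  simp only [rho, Equiv.Perm.mul_apply, finRotate_apply, Equiv.subLeft_apply,
    Equiv.Perm.one_apply]
  abel

theorem rho_rot_inv (m : ℕ) : rho m * (finRotate (m+1))⁻¹ * rho m = finRotate (m+1) := by
  have h := rho_sq m
  rw [← rho_rot, ← mul_assoc, ← mul_assoc, h, one_mul, mul_assoc, h, mul_one]

theorem rho_inv (m : ℕ) : (rho m)⁻¹ = rho m := inv_eq_of_mul_eq_one_right (rho_sq m)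

theorem rho_delta (m : ℕ) (hn : 2 ≤ m+1) :
    rho m * delta (m+1) hn * rho m = delta (m+1) hn := by
  obtain ⟨m, rfl⟩ : ∃ k, m = k + 1 := ⟨m - 1, by omega⟩
  have hd : delta (m+1+1) hn = Equiv.swap 0 1 := rfl
  have h := Equiv.swap_apply_apply (rho (m+1)) 0 1
  rw [rho_inv] at h
  rw [hd, ← h]
  simp [rho, Equiv.swap_comm]

theorem rho_gens {m : ℕ} (hn : 2 ≤ m+1) (l : List (Equiv.Perm (Fin (m+1))))
    (hl : ∀ x ∈ l, x ∈ gens (m+1) hn) :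
    ∃ l' : List (Equiv.Perm (Fin (m+1))), (∀ x ∈ l', x ∈ gens (m+1) hn) ∧
      l'.prod = rho m * l.prod * rho m ∧ l'.length = l.length := by
  refine ⟨l.map (fun x => rho m * x * rho m), ?_, ?_, by simp⟩
  · intro x hx
    obtain ⟨y, hy, rfl⟩ := List.mem_map.1 hx
    have := hl y hy
    simp only [gens, Set.mem_insert_iff, Set.mem_singleton_iff] at this ⊢
    rcases this with rfl | rfl | rfl
    · left; exact rho_delta m hn
    · right; right; exact rho_rot m
    · right; left; exact rho_rot_inv m
  · have := map_list_prod (MulAut.conj (rho m)) l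
    simp only [MulAut.conj_apply, rho_inv] at this
    rw [this]
    congr 1
    apply List.map_congr_left
    intro x _
    simp [rho_inv]

theorem rot_pow_apply {m : ℕ} (a : ℕ) (i : Fin (m+1)) :
    ((finRotate (m+1)) ^ a) i = i + (a : Fin (m+1)) := by
  induction a with
  | zero => simp
  | succ a ih =>
    rw [pow_succ', Equiv.Perm.mul_apply, ih, finRotate_apply]
    push_cast; abel

theorem rho_rot_pow {m : ℕ} (a : ℕ) :
    rho m * (finRotate (m+1))^a * rho m = ((finRotate (m+1))^a)⁻¹ := by
  rw [eq_inv_iff_mul_eq_one]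
  apply Equiv.ext; intro i
  simp only [rho, Equiv.Perm.mul_apply, rot_pow_apply, Equiv.subLeft_apply,
    Equiv.Perm.one_apply]
  abel

/-- reflection fixing the reversed window -/
theorem rho_rev {m j : ℕ} (hj1 : 2 ≤ j) (hj : j ≤ m + 1) :
    rho m * rev (m+1) j hj * rho m =
      ((finRotate (m+1))^(j-2))⁻¹ * rev (m+1) j hj * (finRotate (m+1))^(j-2) := by
  have key : ((finRotate (m+1))^(j-2) * rho m) * rev (m+1) j hj =
      rev (m+1) j hj * ((finRotate (m+1))^(j-2) * rho m) := by
    have hv : ∀ p : Fin (m+1), (((finRotate (m+1))^(j-2) * rho m) p : ℕ) =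
        if (p : ℕ) < j then j - 1 - p else m + j - p := by
      intro p
      have : ((finRotate (m+1))^(j-2) * rho m) p = ((j - 1 : ℕ) : Fin (m+1)) - p := by
        rw [show j - 1 = j - 2 + 1 by omega]
        simp only [rho, Equiv.Perm.mul_apply, rot_pow_apply, Equiv.subLeft_apply]
        push_cast; abel
      rw [this, Fin.val_sub, Fin.val_natCast, Nat.mod_eq_of_lt (show j - 1 < m + 1 by omega)]
      have := p.isLt
      split_ifs
      · rw [show m + 1 - (p : ℕ) + (j - 1) = (j - 1 - p) + (m + 1) by omega, Nat.add_mod_right,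
          Nat.mod_eq_of_lt (by omega)]
      · rw [Nat.mod_eq_of_lt (by omega)]; omega
    apply Equiv.ext; intro p
    apply Fin.ext
    rw [Equiv.Perm.mul_apply, Equiv.Perm.mul_apply (rev _ _ _), hv, rev_val, rev_val, hv]
    have := p.isLt
    split_ifs <;> omega
  have h2 : rho m * (finRotate (m+1))^(j-2) * rho m = ((finRotate (m+1))^(j-2))⁻¹ :=
    rho_rot_pow _
  have h3 := rho_sq m
  have h4 : rho m * rev (m+1) j hj = ((finRotate (m+1))^(j-2))⁻¹ *
      (rev (m+1) j hj * ((finRotate (m+1))^(j-2) * rho m)) := by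
    rw [← key]; group
  rw [h4]
  simp only [mul_assoc, h3, mul_one]

/-- the two targets are exchanged by the symmetry -/
theorem sym_target {m j : ℕ} (hj1 : 2 ≤ j) (hj : j ≤ m + 1) :
    rho m * (((finRotate (m+1)) ^ (j / 2 - 1))⁻¹ * rev (m+1) j hj) * rho m =
      ((finRotate (m+1)) ^ ((j+1) / 2 - 1))⁻¹ * rev (m+1) j hj * (finRotate (m+1)) ^ (j - 2) := by
  have h3 := rho_sq m
  have h1 : rho m * ((finRotate (m+1)) ^ (j / 2 - 1))⁻¹ * rho m
      = (finRotate (m+1)) ^ (j / 2 - 1) := by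
    rw [← rho_rot_pow, ← mul_assoc, ← mul_assoc, h3, one_mul, mul_assoc, h3, mul_one]
  have h2 := rho_rev hj1 hj
  have h5 : rho m * (((finRotate (m+1)) ^ (j / 2 - 1))⁻¹ * rev (m+1) j hj) * rho m =
      (rho m * ((finRotate (m+1)) ^ (j / 2 - 1))⁻¹ * rho m) *
      (rho m * rev (m+1) j hj * rho m) := by
    simp only [mul_assoc]
    rw [← mul_assoc (rho m) (rho m), h3, one_mul]
  rw [h5, h1, h2, ← mul_assoc, ← mul_assoc]
  congr 2
  rw [mul_inv_eq_iff_eq_mul, eq_inv_mul_iff_mul_eq, ← pow_add]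
  congr 1; omega

/-! ### Upper bound -/

theorem perm_inv_apply {α : Type*} (f : Equiv.Perm α) (x : α) : f⁻¹ (f x) = x :=
  Equiv.symm_apply_apply f x

theorem cyc {m : ℕ} (hn : 2 ≤ m+1) (k : ℕ) (hk : k + 1 ≤ m) (p : Fin (m+1)) :
    ((delta (m+1) hn * (finRotate (m+1) * delta (m+1) hn)^k *
      ((finRotate (m+1))^k)⁻¹) p : ℕ) =
      if (p : ℕ) < k + 1 then (p : ℕ) + 1 else if (p : ℕ) = k + 1 then 0 else p := by
  induction k generalizing p with
  | zero =>
    simp only [pow_zero, mul_one, inv_one, delta_val]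
    split_ifs <;> omega
  | succ k ih =>
    have hq : ∃ q : Fin (m+1), ((finRotate (m+1))^(k+1)) q = p :=
      ⟨((finRotate (m+1))^(k+1))⁻¹ p, by simp⟩
    obtain ⟨q, rfl⟩ := hq
    have e : (delta (m+1) hn * (finRotate (m+1) * delta (m+1) hn)^(k+1) *
      ((finRotate (m+1))^(k+1))⁻¹) (((finRotate (m+1))^(k+1)) q) =
      (delta (m+1) hn * (finRotate (m+1) * delta (m+1) hn)^k *
      ((finRotate (m+1))^k)⁻¹) (((finRotate (m+1))^(k+1)) (delta (m+1) hn q)) := by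
      have hg : delta (m+1) hn * (finRotate (m+1) * delta (m+1) hn)^(k+1) =
          (delta (m+1) hn * (finRotate (m+1) * delta (m+1) hn)^k *
          ((finRotate (m+1))^k)⁻¹) * ((finRotate (m+1))^(k+1) * delta (m+1) hn) := by
        rw [pow_succ, pow_succ]; group
      rw [Equiv.Perm.mul_apply, perm_inv_apply, hg, Equiv.Perm.mul_apply, Equiv.Perm.mul_apply _ (delta (m+1) hn)]
    rw [e, ih (by omega)]
    have hv : ∀ q : Fin (m+1), (((finRotate (m+1))^(k+1)) q : ℕ) =
        if (q : ℕ) + (k + 1) < m + 1 then (q : ℕ) + (k + 1) else (q : ℕ) + (k + 1) - (m + 1) := by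
      intro q
      have := q.isLt
      rw [rot_pow_apply, Fin.val_add, Fin.val_natCast, Nat.add_mod_mod]
      split_ifs
      · rw [Nat.mod_eq_of_lt (by omega)]
      · rw [Nat.mod_eq_sub_mod (by omega), Nat.mod_eq_of_lt (by omega)]
    rw [hv, hv, delta_val]
    have := q.isLt
    split_ifs <;> omega

theorem rev_step {m j : ℕ} (hn : 2 ≤ m+1) (hj1 : 2 ≤ j) (hj : j + 1 ≤ m + 1) :
    rev (m+1) (j+1) hj * (finRotate (m+1))^(j-1) =
      finRotate (m+1) * rev (m+1) j (by omega) * (finRotate (m+1))⁻¹ *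
        (delta (m+1) hn * (finRotate (m+1) * delta (m+1) hn)^(j-1)) := by
  rw [← eq_mul_inv_iff_mul_eq, mul_assoc _ _ ((finRotate (m+1)) ^ (j-1))⁻¹]
  apply Equiv.ext; intro p
  have h1 := cyc hn (j-1) (by omega) p
  rw [Equiv.Perm.mul_apply _ (_ * _)]
  generalize (delta (m+1) hn * (finRotate (m+1) * delta (m+1) hn)^(j-1) *
      ((finRotate (m+1))^(j-1))⁻¹) p = q at h1
  obtain ⟨s, rfl⟩ : ∃ s, finRotate (m+1) s = q := ⟨(finRotate (m+1))⁻¹ q, by simp⟩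
  apply Fin.ext
  simp only [Equiv.Perm.mul_apply, perm_inv_apply]
  rw [rev_val, rot_val, rev_val]
  rw [rot_val] at h1
  have := p.isLt
  have := s.isLt
  split_ifs at h1 ⊢ <;> omega

theorem upper1 {m : ℕ} (hn : 2 ≤ m+1) (j : ℕ) (hj1 : 2 ≤ j) (hj : j ≤ m + 1) :
    ∃ l : List (Equiv.Perm (Fin (m+1))), (∀ x ∈ l, x ∈ gens (m+1) hn) ∧
      l.prod = ((finRotate (m+1)) ^ (j / 2 - 1))⁻¹ * rev (m+1) j hj ∧
      l.length = j * (j - 1) - 1 := by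
  induction j, hj1 using Nat.le_induction with
  | base =>
    refine ⟨[delta (m+1) hn], by simp [gens], ?_, rfl⟩
    apply Equiv.ext; intro p; apply Fin.ext
    have e : ((finRotate (m+1)) ^ (2 / 2 - 1))⁻¹ * rev (m+1) 2 hj = rev (m+1) 2 hj := by simp
    rw [e, List.prod_singleton, delta_val, rev_val]
    split_ifs <;> omega
  | succ j hj1 ih =>
    obtain ⟨l, hl, hp, hlen⟩ := ih (by omega)
    have : ∃ l' : List (Equiv.Perm (Fin (m+1))), (∀ x ∈ l', x ∈ gens (m+1) hn) ∧
        l'.prod = rho m * (((finRotate (m+1)) ^ ((j+1) / 2 - 1))⁻¹ * rev (m+1) (j+1) hj) * rho m ∧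
        l'.length = (j+1) * (j + 1 - 1) - 1 := by
      refine ⟨l ++ ((finRotate (m+1))⁻¹ :: delta (m+1) hn ::
        (List.replicate (j-1) [finRotate (m+1), delta (m+1) hn]).flatten), ?_, ?_, ?_⟩
      · intro x hx
        simp only [List.mem_append, List.mem_cons, List.mem_flatten, List.mem_replicate] at hx
        rcases hx with hx | rfl | rfl | ⟨t, ⟨_, rfl⟩, hx⟩
        · exact hl x hx
        · simp [gens]
        · simp [gens]
        · simp at hx
          rcases hx with rfl | rfl <;> simp [gens]
      · rw [sym_target (by omega) hj]
        rw [List.prod_append, List.prod_cons, List.prod_cons, List.prod_flatten,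
          List.map_replicate, List.prod_replicate, hp, mul_assoc _ (rev (m+1) (j+1) hj),
          show j + 1 - 2 = j - 1 by omega, rev_step hn hj1 hj,
          show (j + 1 + 1)/2 - 1 = (j/2 - 1) + 1 by omega, pow_succ']
        simp only [List.prod_cons, List.prod_nil, mul_one]
        group
      · simp [hlen]
        obtain ⟨k, rfl⟩ : ∃ k, j = k + 2 := ⟨j - 2, by omega⟩
        simp only [show k + 2 - 1 = k + 1 by omega]
        have : 1 ≤ (k+2)*(k+1) := Nat.mul_pos (by omega) (by omega)
        zify [this, show 1 ≤ (k+2+1)*(k+2) from Nat.mul_pos (by omega) (by omega)]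
        ring
    obtain ⟨l', h1, h2, h3⟩ := this
    obtain ⟨l'', h4, h5, h6⟩ := rho_gens hn l' h1
    refine ⟨l'', h4, ?_, by omega⟩
    have h := rho_sq m
    rw [h5, h2]
    simp only [mul_assoc, h, mul_one]
    rw [← mul_assoc, h, one_mul]

end Stmt16Aux


/-- For `n ≥ 3`, `2 ≤ j ≤ ⌈n/2⌉`, any `π ∈ S_n`, and `ξ` the
permutation reversing the first `j` entries of `π`'s one-line notation, the word
metric with respect to `{(1 2), r, r⁻¹}` satisfies both
`dist(π r^(⌊j/2⌋ - 1), ξ) = j(j-1) - 1` and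
`dist(π r^(⌈j/2⌉ - 1), ξ r^(j-2)) = j(j-1) - 1`. -/
theorem stmt16 (n : ℕ) (hn : 3 ≤ n) (j : ℕ) (hj1 : 2 ≤ j) (hj2 : j ≤ (n + 1) / 2)
    (π ξ : Equiv.Perm (Fin n))
    (hξ : ∀ p : Fin n, ξ p =
      if h : (p : ℕ) < j then π ⟨j - 1 - (p : ℕ), by omega⟩ else π p) :
    IsMinWordLen n (by omega) ((π * (finRotate n) ^ (j / 2 - 1))⁻¹ * ξ)
      (j * (j - 1) - 1) ∧
    IsMinWordLen n (by omega)
      ((π * (finRotate n) ^ ((j + 1) / 2 - 1))⁻¹ * (ξ * (finRotate n) ^ (j - 2)))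
      (j * (j - 1) - 1) := by
  obtain ⟨m, rfl⟩ : ∃ m, n = m + 1 := ⟨n - 1, by omega⟩
  have h2 : 2 ≤ m + 1 := by omega
  have hj : j ≤ m + 1 := by omega
  have hw : ξ = π * Stmt16Aux.rev (m+1) j hj := by
    apply Equiv.ext; intro p
    rw [hξ, Equiv.Perm.mul_apply]
    split_ifs with h
    · congr 1; apply Fin.ext; rw [Stmt16Aux.rev_val, if_pos h]
    · congr 1; apply Fin.ext; rw [Stmt16Aux.rev_val, if_neg h]
  have e1 : (π * (finRotate (m+1)) ^ (j / 2 - 1))⁻¹ * ξ =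
      ((finRotate (m+1)) ^ (j / 2 - 1))⁻¹ * Stmt16Aux.rev (m+1) j hj := by
    rw [hw]; group
  have e2 : (π * (finRotate (m+1)) ^ ((j + 1) / 2 - 1))⁻¹ * (ξ * (finRotate (m+1)) ^ (j - 2)) =
      Stmt16Aux.rho m * (((finRotate (m+1)) ^ (j / 2 - 1))⁻¹ * Stmt16Aux.rev (m+1) j hj)
        * Stmt16Aux.rho m := by
    rw [Stmt16Aux.sym_target hj1 hj, hw]; group
  have hs := Stmt16Aux.rho_sq m
  obtain ⟨l, hl, hp, hlen⟩ := Stmt16Aux.upper1 h2 j hj1 hj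
  rw [e1, e2]
  refine ⟨⟨⟨l, hl, hp, hlen⟩, ?_⟩, ⟨?_, ?_⟩⟩
  · intro l' hl' hp'
    exact Stmt16Aux.lower1 h2 hj1 (by omega) hj _ l' hl' hp'
  · obtain ⟨l', a, b, c⟩ := Stmt16Aux.rho_gens h2 l hl
    exact ⟨l', a, by rw [b, hp], by rw [c, hlen]⟩
  · intro l' hl' hp'
    obtain ⟨l'', a, b, c⟩ := Stmt16Aux.rho_gens h2 l' hl'
    rw [← c]
    refine Stmt16Aux.lower1 h2 hj1 (by omega) hj (j / 2 - 1) l'' a ?_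
    rw [b, hp']
    simp only [mul_assoc, hs, mul_one]
    rw [← mul_assoc, hs, one_mul]
end
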